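/- arXiv:1702.02826 — 3 statements merged into one kernel-verified Lean document; each statement's English description precedes it below -/
import Mathlib

section
/- Fix 0 < α < 2 and δ₁, δ₂ > 0, and let g = g_{α,δ₁,δ₂}: ℝ → ℝ be the piecewise map defined below. Let μ be the probability measure on ℝ with density ρ_{α,δ₁,δ₂} with respect to Lebesgue measure. Then g is measure-preserving for μ: the pushforward of μ under g equals μ. -/
open MeasureTheory Filter

/-- The asymmetric power-law invariant density `ρ_{α,δ₁,δ₂}`. -/
noncomputable def rhoDensity (α δ₁ δ₂ : ℝ) (x : ℝ) : ℝ :=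
  if 0 < x then α * δ₁ ^ α * x ^ (α - 1) / (Real.pi * (1 + δ₁ ^ (2 * α) * x ^ (2 * α)))
  else if x < 0 then α * δ₂ ^ α * |x| ^ (α - 1) / (Real.pi * (1 + δ₂ ^ (2 * α) * |x| ^ (2 * α)))
  else 0

/-- The piecewise chaotic map `g_{α,δ₁,δ₂}` of Umeno. -/
noncomputable def gMap (α δ₁ δ₂ : ℝ) (x : ℝ) : ℝ :=
  if 1 / δ₁ < x then
    1 / (δ₁ ^ 2 * |x|) * ((|δ₁ * x| ^ (2 * α) - 1) / 2) ^ (1 / α)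
  else if 0 < x ∧ x < 1 / δ₁ then
    -(1 / (δ₁ * δ₂ * |x|)) * ((1 - |δ₁ * x| ^ (2 * α)) / 2) ^ (1 / α)
  else if -(1 / δ₂) < x ∧ x < 0 then
    1 / (δ₁ * δ₂ * |x|) * ((1 - |δ₂ * x| ^ (2 * α)) / 2) ^ (1 / α)
  else if x < -(1 / δ₂) then
    -(1 / (δ₂ ^ 2 * |x|)) * ((|δ₂ * x| ^ (2 * α) - 1) / 2) ^ (1 / α)
  else 0

/-- The conjugating map to the Cauchy/Boole picture. -/
noncomputable def phiMap (α δ₁ δ₂ : ℝ) (x : ℝ) : ℝ :=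
  if 0 < x then (δ₁ * x) ^ α else if x < 0 then -(δ₂ * (-x)) ^ α else 0

/-- The angle-doubling map. -/
noncomputable def dblMap (θ : ℝ) : ℝ :=
  if 0 < θ then 2 * θ - Real.pi / 2 else if θ < 0 then 2 * θ + Real.pi / 2 else 0

/-- Uniform measure. -/
noncomputable def unifMeas : Measure ℝ :=
  ENNReal.ofReal (1 / Real.pi) • volume.restrict (Set.Ioo (-(Real.pi / 2)) (Real.pi / 2))

lemma measurable_gMap (α δ₁ δ₂ : ℝ) : Measurable (gMap α δ₁ δ₂) := by
  unfold gMap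
  refine Measurable.ite measurableSet_Ioi (by fun_prop) ?_
  refine Measurable.ite measurableSet_Ioo (by fun_prop) ?_
  refine Measurable.ite measurableSet_Ioo (by fun_prop) ?_
  exact Measurable.ite measurableSet_Iio (by fun_prop) (by fun_prop)

lemma measurable_phiMap (α δ₁ δ₂ : ℝ) : Measurable (phiMap α δ₁ δ₂) := by
  unfold phiMap
  refine Measurable.ite measurableSet_Ioi (by fun_prop) ?_
  exact Measurable.ite measurableSet_Iio (by fun_prop) (by fun_prop)

lemma measurable_dblMap : Measurable dblMap := by
  unfold dblMap
  refine Measurable.ite measurableSet_Ioi (by fun_prop) ?_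
  exact Measurable.ite measurableSet_Iio (by fun_prop) (by fun_prop)

lemma phiMap_injective {α δ₁ δ₂ : ℝ} (hα : 0 < α) (h1 : 0 < δ₁) (h2 : 0 < δ₂) :
    Function.Injective (phiMap α δ₁ δ₂) := by
  have P1 : ∀ x, 0 < x → 0 < (δ₁ * x) ^ α := fun x hx => by positivity
  have P2 : ∀ x, x < 0 → 0 < (δ₂ * (-x)) ^ α := fun x hx => by
    have : 0 < -x := by linarith
    positivity
  intro x y h
  unfold phiMap at h
  rcases lt_trichotomy x 0 with hx | hx | hx <;> rcases lt_trichotomy y 0 with hy | hy | hy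
  · rw [if_neg hx.not_gt, if_pos hx, if_neg hy.not_gt, if_pos hy, neg_inj] at h
    have := (Real.rpow_left_inj (by nlinarith) (by nlinarith) hα.ne').1 h
    have := mul_left_cancel₀ h2.ne' this
    linarith
  · have := P2 x hx
    simp [hx, hy, hx.not_gt] at h; rw [mul_neg] at this
    linarith
  · have := P2 x hx
    have := P1 y hy
    simp only [hx, hy, hx.not_gt, if_true, if_false] at h
    linarith
  · have := P2 y hy
    simp [hx, hy, hy.not_gt] at h; rw [mul_neg] at this
    linarith
  · linarith
  · have := P1 y hy
    simp [hx, hy] at h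
    linarith
  · have := P2 y hy
    have := P1 x hx
    simp only [hx, hy, hy.not_gt, if_true, if_false] at h
    linarith
  · have := P1 x hx
    simp [hx, hy] at h
    linarith
  · rw [if_pos hx, if_pos hy] at h
    have := (Real.rpow_left_inj (by positivity) (by positivity) hα.ne').1 h
    exact mul_left_cancel₀ h1.ne' this

lemma phiMap_image {α δ₁ δ₂ : ℝ} (hα : 0 < α) (h1 : 0 < δ₁) (h2 : 0 < δ₂) (u : ℝ) (hu : u ≠ 0) :
    ∃ x, x ≠ 0 ∧ phiMap α δ₁ δ₂ x = u := by
  rcases hu.lt_or_gt with hu | hu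
  · have hu' : 0 < -u := by linarith
    have hp : 0 < (-u) ^ (1 / α) / δ₂ := by positivity
    refine ⟨-((-u) ^ (1 / α) / δ₂), by linarith, ?_⟩
    unfold phiMap
    rw [if_neg (by linarith), if_pos (by linarith), neg_neg, mul_div_cancel₀ _ h2.ne',
      ← Real.rpow_mul hu'.le, one_div_mul_cancel hα.ne', Real.rpow_one, neg_neg]
  · have hp : 0 < u ^ (1 / α) / δ₁ := by positivity
    refine ⟨u ^ (1 / α) / δ₁, hp.ne', ?_⟩
    unfold phiMap
    rw [if_pos hp, mul_div_cancel₀ _ h1.ne',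
      ← Real.rpow_mul hu.le, one_div_mul_cancel hα.ne', Real.rpow_one]

lemma phiMap_zero (α δ₁ δ₂ : ℝ) : phiMap α δ₁ δ₂ 0 = 0 := by simp [phiMap]

lemma rpow_two_mul_eq {d a : ℝ} (hd : 0 < d) : d ^ (2 * a) = (d ^ a) ^ 2 := by
  rw [mul_comm, Real.rpow_mul hd.le, Real.rpow_two]

lemma rhoDensity_nonneg {α δ₁ δ₂ : ℝ} (hα : 0 < α) (h1 : 0 < δ₁) (h2 : 0 < δ₂) (x : ℝ) :
    0 ≤ rhoDensity α δ₁ δ₂ x := by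
  unfold rhoDensity
  have := Real.pi_pos
  split_ifs <;> positivity

lemma measurable_rhoDensity (α δ₁ δ₂ : ℝ) : Measurable (rhoDensity α δ₁ δ₂) := by
  unfold rhoDensity
  refine Measurable.ite measurableSet_Ioi (by fun_prop) ?_
  exact Measurable.ite measurableSet_Iio (by fun_prop) (by fun_prop)

lemma hasDerivAt_T {α δ₁ δ₂ : ℝ} (h1 : 0 < δ₁) (h2 : 0 < δ₂) (x : ℝ)
    (hx : x ≠ 0) :
    HasDerivAt (fun x => Real.arctan (phiMap α δ₁ δ₂ x)) (Real.pi * rhoDensity α δ₁ δ₂ x) x := by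
  have hpi := Real.pi_pos
  rcases hx.lt_or_gt with hx | hx
  · have hx' : 0 < -x := by linarith
    have e : (fun x => Real.arctan (phiMap α δ₁ δ₂ x)) =ᶠ[nhds x]
        fun x => Real.arctan (-(δ₂ ^ α * (-x) ^ α)) := by
      filter_upwards [Iio_mem_nhds hx] with y hy
      have hy : y < 0 := hy
      simp only [phiMap, if_neg hy.not_gt, if_pos hy]
      rw [Real.mul_rpow h2.le (by linarith)]
    refine HasDerivAt.congr_of_eventuallyEq ?_ e
    have d := (((((hasDerivAt_id x).neg).rpow_const (p := α) (Or.inl hx'.ne')).const_mul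
      (δ₂ ^ α)).neg).arctan
    refine d.congr_deriv ?_
    simp only [rhoDensity, if_neg hx.not_gt, if_pos hx, abs_of_neg hx, id, Pi.neg_apply]
    rw [rpow_two_mul_eq h2, rpow_two_mul_eq hx']
    field_simp
  · have e : (fun x => Real.arctan (phiMap α δ₁ δ₂ x)) =ᶠ[nhds x]
        fun x => Real.arctan (δ₁ ^ α * x ^ α) := by
      filter_upwards [Ioi_mem_nhds hx] with y hy
      have hy : 0 < y := hy
      simp only [phiMap, if_pos hy]
      rw [Real.mul_rpow h1.le hy.le]
    refine HasDerivAt.congr_of_eventuallyEq ?_ e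
    have d := (((hasDerivAt_id x).rpow_const (p := α) (Or.inl hx.ne')).const_mul
      (δ₁ ^ α)).arctan
    refine d.congr_deriv ?_
    simp only [rhoDensity, if_pos hx, id]
    rw [rpow_two_mul_eq h1, rpow_two_mul_eq hx]
    field_simp

lemma mp_T {α δ₁ δ₂ : ℝ} (hα : 0 < α) (h1 : 0 < δ₁) (h2 : 0 < δ₂) :
    MeasurePreserving (fun x => Real.arctan (phiMap α δ₁ δ₂ x))
      (volume.withDensity (fun x => ENNReal.ofReal (rhoDensity α δ₁ δ₂ x))) unifMeas := by
  have hpi := Real.pi_pos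
  have hm : Measurable (fun x => Real.arctan (phiMap α δ₁ δ₂ x)) :=
    Real.measurable_arctan.comp (measurable_phiMap _ _ _)
  refine ⟨hm, ?_⟩
  ext A hA
  rw [Measure.map_apply hm hA, withDensity_apply _ (hm hA)]
  set T := (fun x => Real.arctan (phiMap α δ₁ δ₂ x)) with hT
  have hinj : Function.Injective T :=
    Real.arctan_injective.comp (phiMap_injective hα h1 h2)
  have hS : MeasurableSet (T ⁻¹' A \ {0}) := (hm hA).diff (measurableSet_singleton 0)
  have key := lintegral_image_eq_lintegral_abs_deriv_mul (f := T)
    (f' := fun x => Real.pi * rhoDensity α δ₁ δ₂ x) hS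
    (fun x hx => (hasDerivAt_T h1 h2 x hx.2).hasDerivWithinAt) hinj.injOn
    (fun _ => ENNReal.ofReal (1 / Real.pi))
  have e1 : ∫⁻ x in T ⁻¹' A, ENNReal.ofReal (rhoDensity α δ₁ δ₂ x)
      = ∫⁻ x in T ⁻¹' A \ {0}, ENNReal.ofReal (rhoDensity α δ₁ δ₂ x) := by
    refine setLIntegral_congr ?_
    exact (diff_null_ae_eq_self (by simp)).symm
  have e2 : ∀ x, ENNReal.ofReal |Real.pi * rhoDensity α δ₁ δ₂ x| * ENNReal.ofReal (1 / Real.pi)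
      = ENNReal.ofReal (rhoDensity α δ₁ δ₂ x) := by
    intro x
    have := rhoDensity_nonneg hα h1 h2 x
    rw [abs_of_nonneg (by positivity), ← ENNReal.ofReal_mul (by positivity)]
    congr 1
    field_simp
  simp only [e2] at key
  rw [e1, ← key]
  have himg : T '' (T ⁻¹' A \ {0}) = (A ∩ Set.Ioo (-(Real.pi / 2)) (Real.pi / 2)) \ {0} := by
    ext y
    constructor
    · rintro ⟨x, ⟨hxA, hx0⟩, rfl⟩
      refine ⟨⟨hxA, Real.neg_pi_div_two_lt_arctan _, Real.arctan_lt_pi_div_two _⟩, ?_⟩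
      intro h
      apply hx0
      apply hinj
      rw [h]
      simp [hT, phiMap_zero]
    · rintro ⟨⟨hyA, hy1, hy2⟩, hy0⟩
      have ht : Real.tan y ≠ 0 := by
        intro h
        apply hy0
        have := Real.arctan_tan hy1 hy2
        rw [h, Real.arctan_zero] at this
        exact this.symm
      obtain ⟨x, hx0, hx⟩ := phiMap_image hα h1 h2 _ ht
      have : T x = y := by simp only [hT, hx]; exact Real.arctan_tan hy1 hy2
      exact ⟨x, ⟨by simpa [this] using hyA, hx0⟩, this⟩
  rw [himg, lintegral_const, Measure.restrict_apply MeasurableSet.univ, Set.univ_inter,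
    measure_sdiff_null (by simp), unifMeas, Measure.smul_apply, Measure.restrict_apply hA,
    smul_eq_mul]

lemma vol_affine (A : Set ℝ) (b : ℝ) :
    volume ((fun θ => 2 * θ + b) ⁻¹' A) = ENNReal.ofReal (1 / 2) * volume A := by
  have : (fun θ : ℝ => 2 * θ + b) ⁻¹' A = (fun θ => 2 * θ) ⁻¹' ((fun θ => θ + b) ⁻¹' A) := rfl
  rw [this, Real.volume_preimage_mul_left two_ne_zero, measure_preimage_add_right]
  congr 2
  norm_num

lemma mp_dbl : MeasurePreserving dblMap unifMeas unifMeas := by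
  have hpi := Real.pi_pos
  refine ⟨measurable_dblMap, ?_⟩
  ext A hA
  rw [Measure.map_apply measurable_dblMap hA, unifMeas, Measure.smul_apply, Measure.smul_apply,
    Measure.restrict_apply hA, Measure.restrict_apply (measurable_dblMap hA)]
  congr 1
  set I := Set.Ioo (-(Real.pi / 2)) (Real.pi / 2) with hI
  have hAI : MeasurableSet (A ∩ I) := hA.inter measurableSet_Ioo
  have hs : (dblMap ⁻¹' A ∩ I) \ {0} = (fun θ => 2 * θ + (-(Real.pi / 2))) ⁻¹' (A ∩ I) ∪
      (fun θ => 2 * θ + Real.pi / 2) ⁻¹' (A ∩ I) := by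
    ext θ
    simp only [hI, dblMap, Set.mem_diff, Set.mem_inter_iff, Set.mem_preimage, Set.mem_union,
      Set.mem_Ioo, Set.mem_singleton_iff]
    constructor
    · rintro ⟨⟨h, ha, hb⟩, h0⟩
      rcases Ne.lt_or_gt h0 with hn | hp
      · rw [if_neg hn.not_gt, if_pos hn] at h
        exact Or.inr ⟨h, by linarith, by linarith⟩
      · rw [if_pos hp, sub_eq_add_neg] at h
        exact Or.inl ⟨h, by linarith, by linarith⟩
    · rintro (⟨h, ha, hb⟩ | ⟨h, ha, hb⟩)
      · have hp : 0 < θ := by linarith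
        rw [if_pos hp, sub_eq_add_neg]
        exact ⟨⟨h, by linarith, by linarith⟩, hp.ne'⟩
      · have hp : θ < 0 := by linarith
        rw [if_neg hp.not_gt, if_pos hp]
        exact ⟨⟨h, by linarith, by linarith⟩, hp.ne⟩
  rw [← measure_sdiff_null (s := dblMap ⁻¹' A ∩ I) (t := {0}) (by simp), hs, measure_union,
    vol_affine, vol_affine, ← add_mul, ← ENNReal.ofReal_add (by norm_num) (by norm_num)]
  · norm_num
  · rw [Set.disjoint_left]
    rintro θ ⟨-, ha, hb⟩ ⟨-, hc, hd⟩
    simp only at ha hb hc hd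
    linarith
  · exact (by fun_prop : Measurable fun θ : ℝ => 2 * θ + Real.pi / 2) hAI

lemma dbl_arctan_pos {u : ℝ} (hu : 0 < u) :
    2 * Real.arctan u - Real.pi / 2 = Real.arctan ((u - 1 / u) / 2) := by
  have hpi := Real.pi_pos
  have a1 := Real.arctan_pos.2 hu
  have a2 := Real.arctan_lt_pi_div_two u
  symm
  apply Real.arctan_eq_of_tan_eq
  · have : 2 * Real.arctan u - Real.pi / 2 = -(Real.pi / 2 - 2 * Real.arctan u) := by ring
    rw [this, Real.tan_neg, Real.tan_pi_div_two_sub, Real.tan_two_mul, Real.tan_arctan]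
    field_simp
    ring
  · constructor <;> linarith

lemma dbl_arctan (u : ℝ) : dblMap (Real.arctan u) = Real.arctan ((u - 1 / u) / 2) := by
  unfold dblMap
  rcases lt_trichotomy u 0 with hu | hu | hu
  · have a1 := Real.arctan_lt_zero.2 hu
    rw [if_neg a1.not_gt, if_pos a1]
    have := dbl_arctan_pos (u := -u) (by linarith)
    rw [Real.arctan_neg] at this
    have e : (-u - 1 / -u) / 2 = -((u - 1 / u) / 2) := by rw [one_div_neg_eq_neg_one_div]; ring
    rw [e, Real.arctan_neg] at this
    linarith
  · simp [hu]
  · rw [if_pos (Real.arctan_pos.2 hu), dbl_arctan_pos hu]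

lemma rpow_aux {α a c : ℝ} (hα : 0 < α) (ha : 0 < a) (hc : 0 ≤ c) :
    (1 / a * c ^ (1 / α)) ^ α = c / a ^ α := by
  rw [Real.mul_rpow (by positivity) (by positivity), ← Real.rpow_mul hc,
    one_div_mul_cancel hα.ne', Real.rpow_one, one_div, Real.inv_rpow ha.le]
  ring

lemma phi_gMap {α δ₁ δ₂ : ℝ} (hα : 0 < α) (h1 : 0 < δ₁) (h2 : 0 < δ₂) (x : ℝ) :
    phiMap α δ₁ δ₂ (gMap α δ₁ δ₂ x) =
      (phiMap α δ₁ δ₂ x - 1 / phiMap α δ₁ δ₂ x) / 2 := by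
  have i1 : 0 < 1 / δ₁ := by positivity
  have i2 : 0 < 1 / δ₂ := by positivity
  rcases lt_trichotomy x 0 with hx | hx | hx
  · have hx' : 0 < -x := by linarith
    have hw : 0 < δ₂ * (-x) := by positivity
    have habs : |δ₂ * x| = δ₂ * (-x) := by rw [abs_mul, abs_of_pos h2, abs_of_neg hx]
    have hφ : phiMap α δ₁ δ₂ x = -(δ₂ * (-x)) ^ α := by
      simp only [phiMap, if_neg hx.not_gt, if_pos hx]
    have hp : 0 < (δ₂ * (-x)) ^ α := by positivity
    have hn1 : ¬ 1 / δ₁ < x := by linarith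
    have hn2 : ¬ (0 < x ∧ x < 1 / δ₁) := fun h => by linarith [h.1]
    rw [hφ]
    rcases lt_trichotomy x (-(1 / δ₂)) with hc | hc | hc
    · have hw1 : 1 < δ₂ * (-x) := by
        have : 1 / δ₂ < -x := by linarith
        rwa [div_lt_iff₀' h2] at this
      have hp1 : 1 < (δ₂ * (-x)) ^ α := Real.one_lt_rpow hw1 hα
      have hc1 : 0 < ((δ₂ * (-x)) ^ (2 * α) - 1) / 2 := by
        rw [rpow_two_mul_eq hw]; nlinarith
      have hg : gMap α δ₁ δ₂ x =
          -(1 / (δ₂ ^ 2 * (-x)) * (((δ₂ * (-x)) ^ (2 * α) - 1) / 2) ^ (1 / α)) := by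
        unfold gMap
        rw [if_neg hn1, if_neg hn2, if_neg (fun h => by linarith [h.1]), if_pos hc, habs,
          abs_of_neg hx, neg_mul]
      have hq : 0 < 1 / (δ₂ ^ 2 * (-x)) * (((δ₂ * (-x)) ^ (2 * α) - 1) / 2) ^ (1 / α) := by
        positivity
      have e : δ₂ * (1 / (δ₂ ^ 2 * (-x)) * (((δ₂ * (-x)) ^ (2 * α) - 1) / 2) ^ (1 / α)) =
          1 / (δ₂ * (-x)) * (((δ₂ * (-x)) ^ (2 * α) - 1) / 2) ^ (1 / α) := by
        have : -x ≠ 0 := hx'.ne'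
        field_simp
      rw [hg, phiMap, if_neg (by linarith), if_pos (by linarith), neg_neg, e,
        rpow_aux hα hw hc1.le, rpow_two_mul_eq hw]
      generalize (δ₂ * (-x)) ^ α = p at *
      field_simp
      ring
    · have hg : gMap α δ₁ δ₂ x = 0 := by
        unfold gMap
        rw [if_neg hn1, if_neg hn2, if_neg (fun h => by linarith [h.1]), if_neg (by linarith)]
      have : δ₂ * (-x) = 1 := by rw [hc]; field_simp
      rw [hg, phiMap_zero, this]
      simp
    · have hw1 : δ₂ * (-x) < 1 := by
        have : -x < 1 / δ₂ := by linarith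
        rwa [lt_div_iff₀' h2] at this
      have hp1 : (δ₂ * (-x)) ^ α < 1 := Real.rpow_lt_one hw.le hw1 hα
      have hc1 : 0 < (1 - (δ₂ * (-x)) ^ (2 * α)) / 2 := by
        rw [rpow_two_mul_eq hw]; nlinarith
      have hg : gMap α δ₁ δ₂ x =
          (1 / (δ₁ * δ₂ * (-x)) * ((1 - (δ₂ * (-x)) ^ (2 * α)) / 2) ^ (1 / α)) := by
        unfold gMap
        rw [if_neg hn1, if_neg hn2, if_pos ⟨hc, hx⟩, habs, abs_of_neg hx]
      have hq : 0 < 1 / (δ₁ * δ₂ * (-x)) * ((1 - (δ₂ * (-x)) ^ (2 * α)) / 2) ^ (1 / α) := by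
        positivity
      have e : δ₁ * (1 / (δ₁ * δ₂ * (-x)) * ((1 - (δ₂ * (-x)) ^ (2 * α)) / 2) ^ (1 / α)) =
          1 / (δ₂ * (-x)) * ((1 - (δ₂ * (-x)) ^ (2 * α)) / 2) ^ (1 / α) := by
        have : -x ≠ 0 := hx'.ne'
        field_simp
      rw [hg, phiMap, if_pos hq, e, rpow_aux hα hw hc1.le, rpow_two_mul_eq hw]
      generalize (δ₂ * (-x)) ^ α = p at *
      field_simp
      ring
  · subst hx
    have hg : gMap α δ₁ δ₂ 0 = 0 := by
      unfold gMap
      simp [h1.le, h2.le]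
    rw [hg, phiMap_zero]
    simp
  · have hw : 0 < δ₁ * x := by positivity
    have habs : |δ₁ * x| = δ₁ * x := abs_of_pos hw
    have hφ : phiMap α δ₁ δ₂ x = (δ₁ * x) ^ α := by
      simp only [phiMap, if_pos hx]
    have hp : 0 < (δ₁ * x) ^ α := by positivity
    rw [hφ]
    rcases lt_trichotomy x (1 / δ₁) with hc | hc | hc
    · have hw1 : δ₁ * x < 1 := by
        rwa [lt_div_iff₀' h1] at hc
      have hp1 : (δ₁ * x) ^ α < 1 := Real.rpow_lt_one hw.le hw1 hα
      have hc1 : 0 < (1 - (δ₁ * x) ^ (2 * α)) / 2 := by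
        rw [rpow_two_mul_eq hw]; nlinarith
      have hg : gMap α δ₁ δ₂ x =
          -(1 / (δ₁ * δ₂ * x) * ((1 - (δ₁ * x) ^ (2 * α)) / 2) ^ (1 / α)) := by
        unfold gMap
        rw [if_neg hc.not_gt, if_pos ⟨hx, hc⟩, habs, abs_of_pos hx, neg_mul]
      have hq : 0 < 1 / (δ₁ * δ₂ * x) * ((1 - (δ₁ * x) ^ (2 * α)) / 2) ^ (1 / α) := by
        positivity
      have e : δ₂ * (1 / (δ₁ * δ₂ * x) * ((1 - (δ₁ * x) ^ (2 * α)) / 2) ^ (1 / α)) =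
          1 / (δ₁ * x) * ((1 - (δ₁ * x) ^ (2 * α)) / 2) ^ (1 / α) := by
        field_simp
      rw [hg, phiMap, if_neg (by linarith), if_pos (by linarith), neg_neg, e,
        rpow_aux hα hw hc1.le, rpow_two_mul_eq hw]
      generalize (δ₁ * x) ^ α = p at *
      field_simp
      ring
    · have hg : gMap α δ₁ δ₂ x = 0 := by
        unfold gMap
        rw [if_neg (by linarith), if_neg (fun h => by linarith [h.2]),
          if_neg (fun h => by linarith [h.2]), if_neg (by linarith)]
      have : δ₁ * x = 1 := by rw [hc]; field_simp
      rw [hg, phiMap_zero, this]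
      simp
    · have hw1 : 1 < δ₁ * x := by
        rwa [div_lt_iff₀' h1] at hc
      have hp1 : 1 < (δ₁ * x) ^ α := Real.one_lt_rpow hw1 hα
      have hc1 : 0 < ((δ₁ * x) ^ (2 * α) - 1) / 2 := by
        rw [rpow_two_mul_eq hw]; nlinarith
      have hg : gMap α δ₁ δ₂ x =
          1 / (δ₁ ^ 2 * x) * (((δ₁ * x) ^ (2 * α) - 1) / 2) ^ (1 / α) := by
        unfold gMap
        rw [if_pos hc, habs, abs_of_pos hx]
      have hq : 0 < 1 / (δ₁ ^ 2 * x) * (((δ₁ * x) ^ (2 * α) - 1) / 2) ^ (1 / α) := by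
        positivity
      have e : δ₁ * (1 / (δ₁ ^ 2 * x) * (((δ₁ * x) ^ (2 * α) - 1) / 2) ^ (1 / α)) =
          1 / (δ₁ * x) * (((δ₁ * x) ^ (2 * α) - 1) / 2) ^ (1 / α) := by
        field_simp
      rw [hg, phiMap, if_pos hq, e, rpow_aux hα hw hc1.le, rpow_two_mul_eq hw]
      generalize (δ₁ * x) ^ α = p at *
      field_simp

theorem gMap_measure_preserving
    (α δ₁ δ₂ : ℝ) (hα0 : 0 < α) (hα2 : α < 2) (hδ₁ : 0 < δ₁) (hδ₂ : 0 < δ₂)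
    (μ : Measure ℝ)
    (hμ : μ = volume.withDensity (fun x => ENNReal.ofReal (rhoDensity α δ₁ δ₂ x))) :
    MeasurePreserving (gMap α δ₁ δ₂) μ μ := by
  have hT := mp_T hα0 hδ₁ hδ₂
  rw [← hμ] at hT
  have hg := measurable_gMap α δ₁ δ₂
  refine ⟨hg, ?_⟩
  have hinj : Function.Injective (fun x => Real.arctan (phiMap α δ₁ δ₂ x)) :=
    Real.arctan_injective.comp (phiMap_injective hα0 hδ₁ hδ₂)
  have hE : MeasurableEmbedding (fun x => Real.arctan (phiMap α δ₁ δ₂ x)) :=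
    hT.measurable.measurableEmbedding hinj
  have hcomm : (fun x => Real.arctan (phiMap α δ₁ δ₂ x)) ∘ gMap α δ₁ δ₂ =
      dblMap ∘ (fun x => Real.arctan (phiMap α δ₁ δ₂ x)) := by
    funext x
    simp only [Function.comp]
    rw [phi_gMap hα0 hδ₁ hδ₂, dbl_arctan]
  have hmap : (μ.map (gMap α δ₁ δ₂)).map (fun x => Real.arctan (phiMap α δ₁ δ₂ x)) =
      μ.map (fun x => Real.arctan (phiMap α δ₁ δ₂ x)) := by
    rw [Measure.map_map hT.measurable hg, hcomm, (mp_dbl.comp hT).map_eq, hT.map_eq]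
  rw [← hE.comap_map (μ.map (gMap α δ₁ δ₂)), hmap, hE.comap_map]
end

section
/- Fix 0 < α < 2 and δ₁, δ₂ > 0, and let g = g_{α,δ₁,δ₂}: ℝ → ℝ be the piecewise map defined below. Let μ be the probability measure on ℝ with density ρ_{α,δ₁,δ₂} with respect to Lebesgue measure. Then g is ergodic with respect to μ: g is measure-preserving for μ, and every measurable set A with g⁻¹(A) = A (up to μ-null sets) satisfies μ(A) = 0 or μ(A) = 1. -/
open MeasureTheory Filter

namespace GErg

noncomputable def H (α δ₁ δ₂ x : ℝ) : ℝ :=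
  if 0 < x then (δ₁ * x) ^ α else if x < 0 then -(δ₂ * (-x)) ^ α else 0

noncomputable def K (α δ₁ δ₂ y : ℝ) : ℝ :=
  if 0 < y then y ^ (1 / α) / δ₁ else if y < 0 then -((-y) ^ (1 / α) / δ₂) else 0

noncomputable def F (α δ₁ δ₂ x : ℝ) : ℝ := 1 / 2 - Real.arctan (H α δ₁ δ₂ x) / Real.pi

lemma meas_H (α δ₁ δ₂ : ℝ) : Measurable (H α δ₁ δ₂) := by
  unfold H
  refine Measurable.ite measurableSet_Ioi (by fun_prop) ?_
  exact Measurable.ite measurableSet_Iio (by fun_prop) (by fun_prop)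

lemma meas_K (α δ₁ δ₂ : ℝ) : Measurable (K α δ₁ δ₂) := by
  unfold K
  refine Measurable.ite measurableSet_Ioi (by fun_prop) ?_
  exact Measurable.ite measurableSet_Iio (by fun_prop) (by fun_prop)

lemma rpow_inv' {α u : ℝ} (hα : 0 < α) (hu : 0 < u) : (u ^ α) ^ (1 / α) = u := by
  rw [← Real.rpow_mul hu.le, mul_one_div_cancel hα.ne', Real.rpow_one]

lemma rpow_inv'' {α u : ℝ} (hα : 0 < α) (hu : 0 < u) : (u ^ (1 / α)) ^ α = u := by
  rw [← Real.rpow_mul hu.le, one_div_mul_cancel hα.ne', Real.rpow_one]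

lemma div_rpow' {α u w : ℝ} (hα : 0 < α) (hu : 0 < u) (hw : 0 ≤ w) :
    (w / u ^ α) ^ (1 / α) = w ^ (1 / α) / u := by
  rw [Real.div_rpow hw (by positivity), rpow_inv' hα hu]

lemma two_mul_rpow {α u : ℝ} (hu : 0 < u) : u ^ (2 * α) = (u ^ α) ^ 2 := by
  rw [mul_comm, Real.rpow_mul hu.le]; norm_cast

lemma K_H {α δ₁ δ₂ : ℝ} (hα : 0 < α) (h₁ : 0 < δ₁) (h₂ : 0 < δ₂) (x : ℝ) : K α δ₁ δ₂ (H α δ₁ δ₂ x) = x := by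
  rcases lt_trichotomy x 0 with hx | hx | hx
  · have hp : 0 < δ₂ * (-x) := mul_pos h₂ (by linarith)
    have : 0 < (δ₂ * (-x)) ^ α := by positivity
    simp only [H, hx, not_lt.2 hx.le, if_true, if_false, K]
    rw [if_neg (by linarith), if_pos (by linarith), neg_neg, rpow_inv' hα hp]
    field_simp
  · simp [H, K, hx]
  · have hp : 0 < δ₁ * x := by positivity
    have : 0 < (δ₁ * x) ^ α := by positivity
    simp only [H, hx, if_true, K, this]
    rw [rpow_inv' hα hp]
    field_simp

lemma H_K {α δ₁ δ₂ : ℝ} (hα : 0 < α) (h₁ : 0 < δ₁) (h₂ : 0 < δ₂) (y : ℝ) : H α δ₁ δ₂ (K α δ₁ δ₂ y) = y := by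
  rcases lt_trichotomy y 0 with hx | hx | hx
  · have hp : 0 < (-y) := by linarith
    have : 0 < (-y) ^ (1 / α) / δ₂ := by positivity
    simp only [K, hx, not_lt.2 hx.le, if_true, if_false, H]
    rw [if_neg (by linarith), if_pos (by linarith), neg_neg, mul_div_cancel₀ _ h₂.ne',
      rpow_inv'' hα hp, neg_neg]
  · simp [H, K, hx]
  · have : 0 < y ^ (1 / α) / δ₁ := by positivity
    simp only [H, hx, if_true, K, this]
    rw [mul_div_cancel₀ _ h₁.ne', rpow_inv'' hα hx]

lemma g_eq {α δ₁ δ₂ : ℝ} (hα : 0 < α) (h₁ : 0 < δ₁) (h₂ : 0 < δ₂) (x : ℝ) : gMap α δ₁ δ₂ x =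
    K α δ₁ δ₂ ((H α δ₁ δ₂ x - (H α δ₁ δ₂ x)⁻¹) / 2) := by
  have i₁ : 0 < 1 / δ₁ := by positivity
  have i₂ : 0 < 1 / δ₂ := by positivity
  rcases lt_trichotomy x 0 with hx | hx | hx
  · have hp : 0 < δ₂ * (-x) := mul_pos h₂ (by linarith)
    obtain ⟨u, hu⟩ : ∃ u, u = δ₂ * (-x) := ⟨_, rfl⟩
    rw [← hu] at hp
    have hup : 0 < u ^ α := by positivity
    have hH : H α δ₁ δ₂ x = - u ^ α := by simp [H, hx, not_lt.2 hx.le, hu]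
    have hab : |δ₂ * x| = u := by rw [hu, abs_of_neg (by nlinarith)]; ring
    have hax : |x| = u / δ₂ := by rw [hu, abs_of_neg hx]; field_simp
    have hxu : x = - (u / δ₂) := by rw [hu]; field_simp
    unfold gMap
    rw [if_neg (by linarith), if_neg (by intro h; linarith [h.1]), hH, hab, hax, two_mul_rpow hp]
    rcases lt_trichotomy u 1 with h | h | h
    · have hy : u ^ α < 1 := Real.rpow_lt_one hp.le h hα
      have e : (-u ^ α - (-u ^ α)⁻¹) / 2 = ((1 - (u ^ α) ^ 2) / 2) / u ^ α := by field_simp; ring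
      have hw : 0 < (1 - (u ^ α) ^ 2) / 2 := by nlinarith
      have hc : -(1 / δ₂) < x := by
        rw [hxu]; apply neg_lt_neg; gcongr
      rw [if_pos ⟨hc, hx⟩, e, K, if_pos (by positivity), div_rpow' hα hp hw.le]
      field_simp
    · have hc : x = -(1 / δ₂) := by rw [hxu, h]
      rw [if_neg (by rw [hc]; simp), if_neg (by rw [hc]; simp)]
      simp [h, K]
    · have hy : 1 < u ^ α := Real.one_lt_rpow h hα
      have e : -((-u ^ α - (-u ^ α)⁻¹) / 2) = (((u ^ α) ^ 2 - 1) / 2) / u ^ α := by field_simp; ring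
      have hw : 0 < ((u ^ α) ^ 2 - 1) / 2 := by nlinarith
      have hc : x < -(1 / δ₂) := by
        rw [hxu]; apply neg_lt_neg; gcongr
      have hq : 0 < (((u ^ α) ^ 2 - 1) / 2) / u ^ α := by positivity
      rw [if_neg (by intro h; linarith [h.1]), if_pos hc, K, if_neg (by linarith),
        if_pos (by linarith), e, div_rpow' hα hp hw.le]
      field_simp
  · subst hx
    simp [gMap, H, K, h₁.le, h₂.le, not_lt.2]
  · have hp : 0 < δ₁ * x := by positivity
    obtain ⟨u, hu⟩ : ∃ u, u = δ₁ * x := ⟨_, rfl⟩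
    rw [← hu] at hp
    have hup : 0 < u ^ α := by positivity
    have hH : H α δ₁ δ₂ x = u ^ α := by simp [H, hx, hu]
    have hab : |δ₁ * x| = u := by rw [hu, abs_of_pos (by positivity)]
    have hax : |x| = u / δ₁ := by rw [hu, abs_of_pos hx]; field_simp
    have hxu : x = u / δ₁ := by rw [hu]; field_simp
    unfold gMap
    rw [hH, hab, hax, two_mul_rpow hp]
    rcases lt_trichotomy u 1 with h | h | h
    · have hy : u ^ α < 1 := Real.rpow_lt_one hp.le h hα
      have e : -((u ^ α - (u ^ α)⁻¹) / 2) = ((1 - (u ^ α) ^ 2) / 2) / u ^ α := by field_simp; ring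
      have hw : 0 < (1 - (u ^ α) ^ 2) / 2 := by nlinarith
      have hc : x < 1 / δ₁ := by rw [hxu]; gcongr
      have hq : 0 < ((1 - (u ^ α) ^ 2) / 2) / u ^ α := by positivity
      rw [if_neg (by linarith), if_pos ⟨hx, hc⟩, K, if_neg (by linarith),
        if_pos (by linarith), e, div_rpow' hα hp hw.le]
      field_simp
    · have hc : x = 1 / δ₁ := by rw [hxu, h]
      rw [if_neg (by rw [hc]; simp), if_neg (by rw [hc]; simp), if_neg (by intro h; linarith [h.2]),
        if_neg (by linarith)]
      simp [h, K]
    · have hy : 1 < u ^ α := Real.one_lt_rpow h hα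
      have e : (u ^ α - (u ^ α)⁻¹) / 2 = (((u ^ α) ^ 2 - 1) / 2) / u ^ α := by field_simp
      have hw : 0 < ((u ^ α) ^ 2 - 1) / 2 := by nlinarith
      have hc : 1 / δ₁ < x := by rw [hxu]; gcongr
      rw [if_pos hc, e, K, if_pos (by positivity), div_rpow' hα hp hw.le]
      field_simp

lemma F_deriv {α δ₁ δ₂ : ℝ} (hα : 0 < α) (h₁ : 0 < δ₁) (h₂ : 0 < δ₂) {x : ℝ} (hx : x ≠ 0) :
    HasDerivAt (F α δ₁ δ₂) (-(rhoDensity α δ₁ δ₂ x)) x := by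
  have hpi := Real.pi_pos
  rcases lt_or_gt_of_ne hx with hx | hx
  · have hp : 0 < δ₂ * (-x) := mul_pos h₂ (by linarith)
    have hx' : 0 < -x := by linarith
    have hH : H α δ₁ δ₂ =ᶠ[nhds x] fun z => -(δ₂ * (-z)) ^ α := by
      filter_upwards [Iio_mem_nhds hx] with z hz
      have hz : z < 0 := hz
      simp [H, hz, not_lt.2 hz.le]
    have d1 : HasDerivAt (fun z : ℝ => δ₂ * (-z)) (δ₂ * (-1)) x :=
      ((hasDerivAt_id x).neg).const_mul δ₂
    have d2 := (d1.rpow_const (p := α) (Or.inl hp.ne')).neg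
    have d3 := ((d2.congr_of_eventuallyEq hH).arctan.div_const Real.pi).const_sub (1 / 2)
    refine d3.congr_deriv ?_
    rw [hH.eq_of_nhds, rhoDensity, if_neg (by linarith), if_pos hx, abs_of_neg hx,
      two_mul_rpow h₂, two_mul_rpow hx', Real.mul_rpow h₂.le hx'.le, Real.mul_rpow h₂.le hx'.le,
      Real.rpow_sub_one h₂.ne']
    have a1 : 0 < 1 + (δ₂ ^ α) ^ 2 * ((-x) ^ α) ^ 2 := by positivity
    have a2 : 1 + (-(δ₂ ^ α * (-x) ^ α)) ^ 2 = 1 + (δ₂ ^ α) ^ 2 * ((-x) ^ α) ^ 2 := by ring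
    rw [a2]
    field_simp
  · have hp : 0 < δ₁ * x := by positivity
    have hH : H α δ₁ δ₂ =ᶠ[nhds x] fun z => (δ₁ * z) ^ α := by
      filter_upwards [Ioi_mem_nhds hx] with z hz
      have hz : 0 < z := hz
      simp [H, hz]
    have d1 : HasDerivAt (fun z : ℝ => δ₁ * z) (δ₁ * 1) x :=
      (hasDerivAt_id x).const_mul δ₁
    have d2 := (d1.rpow_const (p := α) (Or.inl hp.ne'))
    have d3 := ((d2.congr_of_eventuallyEq hH).arctan.div_const Real.pi).const_sub (1 / 2)
    refine d3.congr_deriv ?_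
    rw [hH.eq_of_nhds, rhoDensity, if_pos hx, 
      two_mul_rpow h₁, two_mul_rpow hx, Real.mul_rpow h₁.le hx.le, Real.mul_rpow h₁.le hx.le,
      Real.rpow_sub_one h₁.ne']
    have a1 : 0 < 1 + (δ₁ ^ α) ^ 2 * (x ^ α) ^ 2 := by positivity
    have a2 : 1 + ((δ₁ ^ α * x ^ α)) ^ 2 = 1 + (δ₁ ^ α) ^ 2 * (x ^ α) ^ 2 := by ring
    rw [a2]
    field_simp

lemma rho_nonneg {α δ₁ δ₂ : ℝ} (hα : 0 < α) (h₁ : 0 < δ₁) (h₂ : 0 < δ₂) (x : ℝ) : 0 ≤ rhoDensity α δ₁ δ₂ x := by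
  have hpi := Real.pi_pos
  unfold rhoDensity
  split_ifs <;> positivity

lemma F_inj {α δ₁ δ₂ : ℝ} (hα : 0 < α) (h₁ : 0 < δ₁) (h₂ : 0 < δ₂) : Function.Injective (F α δ₁ δ₂) := by
  intro a b hab
  have hpi := Real.pi_pos
  have : Real.arctan (H α δ₁ δ₂ a) = Real.arctan (H α δ₁ δ₂ b) := by
    unfold F at hab
    have h : Real.arctan (H α δ₁ δ₂ a) / Real.pi = Real.arctan (H α δ₁ δ₂ b) / Real.pi := by
      linarith
    field_simp at h
    exact h
  have := Real.arctan_injective this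
  rw [← K_H hα h₁ h₂ a, this, K_H hα h₁ h₂]

lemma F_mem {α δ₁ δ₂ : ℝ} (hα : 0 < α) (h₁ : 0 < δ₁) (h₂ : 0 < δ₂) (x : ℝ) : F α δ₁ δ₂ x ∈ Set.Ioo (0 : ℝ) 1 := by
  have hpi := Real.pi_pos
  have a := Real.arctan_lt_pi_div_two (H α δ₁ δ₂ x)
  have b := Real.neg_pi_div_two_lt_arctan (H α δ₁ δ₂ x)
  have a' : Real.arctan (H α δ₁ δ₂ x) / Real.pi < 1 / 2 := by
    rw [div_lt_iff₀ hpi]; linarith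
  have b' : -(1 / 2) < Real.arctan (H α δ₁ δ₂ x) / Real.pi := by
    rw [lt_div_iff₀ hpi]; linarith
  constructor <;> unfold F <;> linarith

lemma F_image {α δ₁ δ₂ : ℝ} (hα : 0 < α) (h₁ : 0 < δ₁) (h₂ : 0 < δ₂) : F α δ₁ δ₂ '' {0}ᶜ =ᵐ[volume] Set.Ioc (0 : ℝ) (0 + 1) := by
  have hpi := Real.pi_pos
  have hne : ∀ᵐ t : ℝ, t ∉ ({1 / 2, 1} : Set ℝ) :=
    measure_eq_zero_iff_ae_notMem.1 (Set.Finite.measure_zero (by simp) _)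
  filter_upwards [hne] with t ht
  simp only [Set.mem_insert_iff, Set.mem_singleton_iff, not_or] at ht
  apply propext
  constructor
  · rintro ⟨x, -, rfl⟩
    have := F_mem hα h₁ h₂ x
    exact ⟨this.1, by linarith [this.2]⟩
  · rintro ⟨h0, h1⟩
    have h1 : t < 1 := lt_of_le_of_ne (by linarith) ht.2
    have harc : Real.arctan (Real.tan (Real.pi / 2 - Real.pi * t)) = Real.pi / 2 - Real.pi * t :=
      Real.arctan_tan (by nlinarith) (by nlinarith)
    refine ⟨K α δ₁ δ₂ (Real.tan (Real.pi / 2 - Real.pi * t)), ?_, ?_⟩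
    · intro h0
      have h0 : K α δ₁ δ₂ (Real.tan (Real.pi / 2 - Real.pi * t)) = 0 := h0
      have := H_K hα h₁ h₂ (Real.tan (Real.pi / 2 - Real.pi * t))
      rw [h0] at this
      simp only [H, lt_irrefl, if_false] at this
      rw [← this, Real.arctan_zero] at harc
      apply ht.1
      have : Real.pi * (1 / 2 - t) = 0 := by linarith
      rcases mul_eq_zero.1 this with h | h <;> linarith
    · unfold F
      rw [H_K hα h₁ h₂, harc]
      field_simp
      ring

lemma F_meas {α δ₁ δ₂ : ℝ} (hα : 0 < α) (h₁ : 0 < δ₁) (h₂ : 0 < δ₂) : Measurable (F α δ₁ δ₂) := by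
  unfold F
  have := meas_H α δ₁ δ₂
  fun_prop

lemma F_map {α δ₁ δ₂ : ℝ} (hα : 0 < α) (h₁ : 0 < δ₁) (h₂ : 0 < δ₂) : Measure.map (F α δ₁ δ₂)
    (volume.withDensity (fun x => ENNReal.ofReal (rhoDensity α δ₁ δ₂ x))) =
    volume.restrict (Set.Ioc (0 : ℝ) (0 + 1)) := by
  have hs : MeasurableSet ({0}ᶜ : Set ℝ) := (measurableSet_singleton 0).compl
  have hres : (volume : Measure ℝ).restrict ({0}ᶜ : Set ℝ) = volume :=
    Measure.restrict_eq_self_of_ae_mem (compl_mem_ae_iff.2 (measure_singleton 0))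
  have key := map_withDensity_abs_det_fderiv_eq_addHaar (volume : Measure ℝ)
    hs.nullMeasurableSet (fun x (hx : x ∈ ({0}ᶜ : Set ℝ)) =>
      (F_deriv hα h₁ h₂ (x := x) hx).hasDerivWithinAt.hasFDerivWithinAt)
    (F_inj hα h₁ h₂).injOn
  rw [Measure.restrict_congr_set (F_image hα h₁ h₂), hres] at key
  rw [← key]
  congr 2
  ext x
  simp [abs_of_nonneg (rho_nonneg hα h₁ h₂ x)]

noncomputable def c (t : ℝ) : ℝ := Real.cos (Real.pi * t) / Real.sin (Real.pi * t)

lemma c_periodic : Function.Periodic c 1 := by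
  intro t
  simp [c, mul_add, Real.cos_add_pi, Real.sin_add_pi]

lemma c_two (t : ℝ) : c (2 * t) = (c t - (c t)⁻¹) / 2 := by
  unfold c
  rw [show Real.pi * (2 * t) = 2 * (Real.pi * t) by ring, Real.cos_two_mul', Real.sin_two_mul]
  by_cases hs : Real.sin (Real.pi * t) = 0
  · simp [hs]
  by_cases hc : Real.cos (Real.pi * t) = 0
  · simp [hc]
  field_simp

lemma c_F {α δ₁ δ₂ : ℝ} (x : ℝ) : c (F α δ₁ δ₂ x) = H α δ₁ δ₂ x := by
  have hpi := Real.pi_pos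
  unfold c F
  rw [show Real.pi * (1 / 2 - Real.arctan (H α δ₁ δ₂ x) / Real.pi) =
    Real.pi / 2 - Real.arctan (H α δ₁ δ₂ x) by field_simp, Real.cos_pi_div_two_sub,
    Real.sin_pi_div_two_sub, ← Real.tan_eq_sin_div_cos, Real.tan_arctan]

noncomputable def C : UnitAddCircle → ℝ := c_periodic.lift

lemma C_coe (t : ℝ) : C (t : UnitAddCircle) = c t := c_periodic.lift_coe t

lemma C_meas : Measurable C := by
  have : C = fun z => c ((AddCircle.measurableEquivIoc (1 : ℝ) 0 z : Set.Ioc (0 : ℝ) (0 + 1)) : ℝ) := by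
    funext z
    rw [← C_coe]
    congr 1
    exact ((AddCircle.measurableEquivIoc (1 : ℝ) 0).symm_apply_apply z).symm
  rw [this]
  have hc : Measurable c := by unfold c; fun_prop
  exact hc.comp (measurable_subtype_coe.comp (AddCircle.measurableEquivIoc (1 : ℝ) 0).measurable)

end GErg

open GErg in
theorem gMap_ergodic
    (α δ₁ δ₂ : ℝ) (hα0 : 0 < α) (hα2 : α < 2) (hδ₁ : 0 < δ₁) (hδ₂ : 0 < δ₂)
    (μ : Measure ℝ)
    (hμ : μ = volume.withDensity (fun x => ENNReal.ofReal (rhoDensity α δ₁ δ₂ x))) :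
    Ergodic (gMap α δ₁ δ₂) μ := by
  have hg : gMap α δ₁ δ₂ = fun x => K α δ₁ δ₂ ((H α δ₁ δ₂ x - (H α δ₁ δ₂ x)⁻¹) / 2) :=
    funext (g_eq hα0 hδ₁ hδ₂)
  have hH := meas_H α δ₁ δ₂
  have hK := meas_K α δ₁ δ₂
  have hgm : Measurable (gMap α δ₁ δ₂) := by
    rw [hg]
    exact hK.comp (by fun_prop)
  have hφ : Measurable (fun z => K α δ₁ δ₂ (C z)) := hK.comp C_meas
  have hF : MeasurePreserving (F α δ₁ δ₂) μ (volume.restrict (Set.Ioc (0 : ℝ) (0 + 1))) :=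
    ⟨F_meas hα0 hδ₁ hδ₂, by rw [hμ]; exact F_map hα0 hδ₁ hδ₂⟩
  have hFc := (AddCircle.measurePreserving_mk (1 : ℝ) 0).comp hF
  have hmp : MeasurePreserving (fun z => K α δ₁ δ₂ (C z)) (volume : Measure UnitAddCircle) μ := by
    refine ⟨hφ, ?_⟩
    rw [← hFc.map_eq, Measure.map_map hφ hFc.measurable]
    convert Measure.map_id using 2
    funext x
    simp only [Function.comp, id]
    rw [C_coe, c_F, K_H hα0 hδ₁ hδ₂]
  refine hmp.ergodic_of_ergodic_semiconj (AddCircle.ergodic_nsmul (T := (1 : ℝ)) (n := 2) (by norm_num)) hgm ?_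
  intro z
  induction z using QuotientAddGroup.induction_on with
  | H t =>
    have h2 : (2 : ℕ) • (t : UnitAddCircle) = ((2 * t : ℝ) : UnitAddCircle) := by
      rw [← AddCircle.coe_nsmul]; simp
    change K α δ₁ δ₂ (C ((2 : ℕ) • (t : UnitAddCircle))) = gMap α δ₁ δ₂ (K α δ₁ δ₂ (C (t : UnitAddCircle)))
    rw [h2, C_coe, C_coe, g_eq hα0 hδ₁ hδ₂, H_K hα0 hδ₁ hδ₂, c_two]
end

section
/- (Chambers–Mallows–Stuck representation, α = 1.) Fix β ∈ [−1,1]. Let Θ and Ω be independent real random variables, Θ uniformly distributed on (−π/2, π/2) and Ω exponentially distributed with mean 1. Define R = (2/π)[(π/2 + βΘ) tan Θ − β log((π/2 · Ω cos Θ)/(π/2 + βΘ))]. Then R is distributed according to the stable law S(1, β, 1, 0): for every t ∈ ℝ, E[exp(itR)] = φ(t; 1, β, 1, 0). -/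
open MeasureTheory ProbabilityTheory Filter

/-- `w(α,t)` in the definition of the stable characteristic function. -/
noncomputable def stableW (α t : ℝ) : ℝ :=
  if α = 1 then -(2 / Real.pi) * Real.log |t| else Real.tan (Real.pi * α / 2)

/-- The characteristic function `φ(t; α, β, γ, μ)` of the stable law `S(α, β, γ, μ)`. -/
noncomputable def stableChar (α β γ μ : ℝ) (t : ℝ) : ℂ :=
  Complex.exp (Complex.I * (μ : ℂ) * (t : ℂ) -
    ((γ ^ α * |t| ^ α : ℝ) : ℂ) *
      (1 - Complex.I * (β : ℂ) * ((Real.sign t : ℝ) : ℂ) * ((stableW α t : ℝ) : ℂ)))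


lemma cms_integrable (a r : ℂ) (ha : 0 < a.re) (hr : 0 < r.re) :
    IntegrableOn (fun x : ℝ => (x:ℂ)^(a-1) * Complex.exp (-(r*x))) (Set.Ioi 0) := by
  have h := integrableOn_rpow_mul_exp_neg_mul_rpow (s := a.re - 1) (p := 1) (b := r.re) (by linarith) one_pos hr
  refine Integrable.mono h ?_ ?_
  · refine ContinuousOn.aestronglyMeasurable ?_ measurableSet_Ioi
    refine ContinuousOn.mul ?_ (by fun_prop)
    intro x hx
    apply ContinuousAt.continuousWithinAt
    exact (Complex.continuousAt_ofReal_cpow_const x (a-1) (Or.inr (ne_of_gt hx)))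
  · refine (ae_restrict_mem measurableSet_Ioi).mono fun x hx => ?_
    have hx' : 0 < x := hx
    rw [norm_mul, Complex.norm_cpow_eq_rpow_re_of_pos hx', Complex.norm_exp, Real.norm_of_nonneg (by positivity)]
    simp

lemma cms_gamma (a r : ℂ) (ha : 0 < a.re) (hr : 0 < r.re) :
    ∫ x : ℝ in Set.Ioi 0, (x:ℂ)^(a-1) * Complex.exp (-(r*x)) = r^(-a) * Complex.Gamma a := by
  have hU : IsOpen {z : ℂ | 0 < z.re} := isOpen_lt continuous_const Complex.continuous_re
  have hUc : IsPreconnected {z : ℂ | 0 < z.re} := (convex_halfSpace_re_gt 0).isPreconnected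
  have hsl : ∀ z : ℂ, 0 < z.re → z ∈ Complex.slitPlane := fun z hz => Or.inl hz
  have h1 : DifferentiableOn ℂ (fun r : ℂ => ∫ x : ℝ in Set.Ioi 0, (x:ℂ)^(a-1) * Complex.exp (-(r*x))) {z : ℂ | 0 < z.re} := by
    intro z hz
    have hz' : 0 < z.re := hz
    refine DifferentiableAt.differentiableWithinAt ?_
    have hb := integrableOn_rpow_mul_exp_neg_mul_rpow (s := a.re) (p := 1) (b := z.re/2) (by linarith) one_pos (by positivity)
    have := hasDerivAt_integral_of_dominated_loc_of_deriv_le (μ := volume.restrict (Set.Ioi 0))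
      (F := fun r x => (x:ℂ)^(a-1) * Complex.exp (-(r*x)))
      (F' := fun r (x:ℝ) => (x:ℂ)^(a-1) * (Complex.exp (-(r*x)) * (-x)))
      (x₀ := z) (s := {w : ℂ | z.re/2 < w.re}) (bound := fun x => x ^ a.re * Real.exp (-(z.re/2) * x^(1:ℝ)))
      ((isOpen_lt continuous_const Complex.continuous_re).mem_nhds (by simp; linarith)) ?_ (cms_integrable a z ha hz) ?_ ?_ hb ?_
    · exact this.2.differentiableAt
    · filter_upwards [hU.mem_nhds hz] with w hw
      exact (cms_integrable a w ha hw).aestronglyMeasurable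
    · have := (cms_integrable a z ha hz).aestronglyMeasurable.mul (f := fun x:ℝ => (x:ℂ)^(a-1) * Complex.exp (-(z*x))) (g := fun x : ℝ => (-x:ℂ)) (by fun_prop)
      refine this.congr (ae_of_all _ fun x => ?_)
      simp [mul_assoc]
    · refine (ae_restrict_mem measurableSet_Ioi).mono fun x hx w hw => ?_
      have hx' : 0 < x := hx
      have hw' : z.re/2 < w.re := hw
      rw [norm_mul, norm_mul, Complex.norm_cpow_eq_rpow_re_of_pos hx', Complex.norm_exp]
      have : x ^ a.re = x ^ (a-1).re * x := by
        rw [← Real.rpow_add_one hx'.ne']; simp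
      rw [this]
      simp [abs_of_pos hx']
      rw [mul_comm (Real.exp _) x, mul_assoc]
      gcongr
    · refine ae_of_all _ fun x w hw => ?_
      have h : HasDerivAt (fun r : ℂ => -(r*x)) (-(x:ℂ)) w := by
        exact ((hasDerivAt_id w).mul_const (x:ℂ)).neg.congr_deriv (by simp)
      exact h.cexp.const_mul _
  have h2 : DifferentiableOn ℂ (fun r : ℂ => r^(-a) * Complex.Gamma a) {z : ℂ | 0 < z.re} := by
    intro z hz
    exact ((differentiableAt_id.cpow_const (hsl z hz)).mul_const _).differentiableWithinAt
  refine (h1.analyticOnNhd hU).eqOn_of_preconnected_of_frequently_eq (h2.analyticOnNhd hU) hUc (z₀ := 1) (by simp) ?_ hr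
  have ht : Tendsto (fun x : ℝ => (x:ℂ)) (nhdsWithin 1 {1}ᶜ) (nhdsWithin 1 {1}ᶜ) := by
    refine tendsto_nhdsWithin_iff.2 ⟨?_, ?_⟩
    · refine Tendsto.mono_left ?_ nhdsWithin_le_nhds
      have := Complex.continuous_ofReal.tendsto 1
      simpa using this
    · filter_upwards [self_mem_nhdsWithin] with x hx
      simpa using hx
  refine ht.frequently (Eventually.frequently ?_)
  filter_upwards [nhdsWithin_le_nhds (lt_mem_nhds (zero_lt_one (α := ℝ)))] with x hx
  rw [Complex.integral_cpow_mul_exp_neg_mul_Ioi ha hx, one_div, Complex.inv_cpow, ← Complex.cpow_neg]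
  rw [Complex.arg_ofReal_of_nonneg hx.le]; exact Real.pi_pos.ne

lemma cms_cpow_bound (s : ℝ) (z : ℂ) (hz : z ≠ 0) :
    ‖z ^ (-(2 - Complex.I * s))‖ ≤ Real.exp (Real.pi * |s|) * (‖z‖^2)⁻¹ := by
  rw [Complex.norm_cpow_of_ne_zero hz, div_eq_mul_inv, ← Real.exp_neg, mul_comm]
  have h1 : (-(2 - Complex.I * s)).re = -2 := by simp
  have h2 : (-(2 - Complex.I * s)).im = s := by simp
  rw [h1, h2]
  have : ‖z‖ ^ (-2:ℝ) = (‖z‖^2)⁻¹ := by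
    rw [Real.rpow_neg (norm_nonneg _)]; norm_cast
  rw [this]
  gcongr
  calc -(z.arg * s) ≤ |z.arg * s| := neg_le_abs _
    _ = |z.arg| * |s| := abs_mul _ _
    _ ≤ _ := by gcongr; exact Complex.abs_arg_le_pi z

lemma cms_line_cont (s : ℝ) : Continuous (fun y : ℝ => (1 + Complex.I * y) ^ (-(2 - Complex.I * s))) := by
  refine Continuous.cpow (by fun_prop) continuous_const fun y => Or.inl (by simp)

lemma cms_line_integrable (s : ℝ) : Integrable (fun y : ℝ => (1 + Complex.I * y) ^ (-(2 - Complex.I * s))) := by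
  refine Integrable.mono' (integrable_inv_one_add_sq.const_mul (Real.exp (Real.pi * |s|))) (cms_line_cont s).aestronglyMeasurable (ae_of_all _ fun y => ?_)
  have h0 : (1 + Complex.I * y : ℂ) ≠ 0 := fun h => by simpa using congrArg Complex.re h
  refine (cms_cpow_bound s _ h0).trans (le_of_eq ?_)
  have : ‖(1 + Complex.I * y : ℂ)‖^2 = 1 + y^2 := by
    rw [← Complex.normSq_eq_norm_sq, Complex.normSq_apply]; simp; ring
  rw [this]

open FourierTransform in
lemma cms_inversion (s v : ℝ) :
    ∫ y : ℝ, Complex.exp (v * (Complex.I * y)) * (1 + Complex.I * y) ^ (-(2 - Complex.I * s)) * Complex.Gamma (2 - Complex.I * s)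
     = 2 * Real.pi * (Set.indicator (Set.Ioi 0) (fun x : ℝ => (x:ℂ)^(1 - Complex.I * s) * Complex.exp (-x)) v) := by
  set a : ℂ := 2 - Complex.I * s with ha
  have hare : 0 < a.re := by simp [ha]
  have ha1 : a - 1 = 1 - Complex.I * s := by rw [ha]; ring
  set f : ℝ → ℂ := Set.indicator (Set.Ioi 0) (fun x : ℝ => (x:ℂ)^(1 - Complex.I * s) * Complex.exp (-x)) with hf
  have hfe : f = fun x : ℝ => ((max x 0 : ℝ) : ℂ) ^ (1 - Complex.I * s) * Complex.exp (-x) := by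
    ext x
    by_cases hx : 0 < x
    · simp [hf, hx, max_eq_left hx.le]
    · have h0 : (1 - Complex.I * s) ≠ 0 := fun h => by simpa using congrArg Complex.re h
      push Not at hx
      simp [hf, hx, Complex.zero_cpow h0]
  have hfc : Continuous f := by
    rw [hfe]
    refine Continuous.mul ?_ (by fun_prop)
    have := Complex.continuous_ofReal_cpow_const (y := 1 - Complex.I * s) (by simp)
    exact this.comp (continuous_id.max continuous_const)
  have hfi : Integrable f := by
    rw [hf, integrable_indicator_iff measurableSet_Ioi, ← ha1]
    simpa using cms_integrable a 1 hare (by simp)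
  have hF : 𝓕 f = fun ξ : ℝ => (1 + Complex.I * ((2*Real.pi*ξ : ℝ):ℂ)) ^ (-a) * Complex.Gamma a := by
    ext ξ
    rw [Real.fourier_eq', ← cms_gamma a _ hare (by simp), ← integral_indicator measurableSet_Ioi]
    congr 1
    ext x
    by_cases hx : 0 < x
    · simp only [hf, Set.indicator, Set.mem_Ioi, hx, if_true, ha1, smul_eq_mul]
      rw [mul_left_comm, ← Complex.exp_add]
      congr 2
      simp
      ring
    · simp [hf, hx]
  have hFi : Integrable (𝓕 f) := by
    rw [hF]
    have := ((cms_line_integrable s).comp_mul_left' (R := 2*Real.pi) (by positivity)).mul_const (Complex.Gamma a)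
    exact this
  have h := congrFun (hfc.fourierInv_fourier_eq hfi hFi) v
  rw [Real.fourierInv_eq', hF] at h
  rw [← h]
  have := MeasureTheory.Measure.integral_comp_mul_left (fun y : ℝ => Complex.exp (v * (Complex.I * y)) * (1 + Complex.I * y) ^ (-a) * Complex.Gamma a) (2*Real.pi)
  have h3 : (∫ w : ℝ, Complex.exp (((2 * Real.pi * inner ℝ w v : ℝ):ℂ) * Complex.I) • (fun ξ : ℝ => (1 + Complex.I * ((2*Real.pi*ξ : ℝ):ℂ)) ^ (-a) * Complex.Gamma a) w) = ∫ x : ℝ, (fun y : ℝ => Complex.exp (v * (Complex.I * y)) * (1 + Complex.I * y) ^ (-a) * Complex.Gamma a) (2*Real.pi*x) := by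
    congr 1
    ext x
    simp only [smul_eq_mul, mul_assoc]
    congr 2
    simp
    ring
  rw [h3, this, abs_of_pos (by positivity), Complex.real_smul]
  push_cast
  rw [mul_inv_cancel_left₀ (by simp [Real.pi_ne_zero])]

lemma cms_prim (h : ℂ → ℂ) (hd : DifferentiableOn ℂ h {z : ℂ | 0 < z.re}) :
    ∃ H : ℂ → ℂ, ∀ z : ℂ, 0 < z.re → HasDerivAt H (h z) z := by
  have hU : IsOpen {z : ℂ | 0 < z.re} := isOpen_lt continuous_const Complex.continuous_re
  have hdw : ∀ z ∈ {z : ℂ | 0 < z.re}, HasFDerivAt (𝕜 := ℝ) (fun z => h z • (1 : ℂ →L[ℂ] ℂ))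
      (((fderiv ℂ h z).restrictScalars ℝ).smulRight (1 : ℂ →L[ℂ] ℂ)) z := by
    intro z hz
    have := ((hd z hz).differentiableAt (hU.mem_nhds hz)).hasFDerivAt.restrictScalars ℝ
    exact HasFDerivAt.smul_const (𝕜 := ℝ) (𝕜' := ℂ) (F := ℂ →L[ℂ] ℂ) this (1 : ℂ →L[ℂ] ℂ)
  obtain ⟨H, hH⟩ := Convex.exists_forall_hasFDerivAt_of_fderiv_symmetric (𝕜 := ℂ) (convex_halfSpace_re_gt 0) hU
    (ω := fun z => h z • (1 : ℂ →L[ℂ] ℂ)) (fun z hz => (hdw z hz).differentiableAt.differentiableWithinAt) (by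
      intro a ha x y
      rw [(hdw a ha).fderiv]
      simp only [ContinuousLinearMap.smulRight_apply, ContinuousLinearMap.coe_restrictScalars', smul_apply, one_apply_eq_self, smul_eq_mul]
      rw [fderiv_eq_smul_deriv, fderiv_eq_smul_deriv]
      simp only [smul_eq_mul]
      ring)
  refine ⟨H, fun z hz => ?_⟩
  have := (hH z hz).hasDerivAt
  simpa using this

lemma cms_horiz (h H : ℂ → ℂ) (hH : ∀ z : ℂ, 0 < z.re → HasDerivAt H (h z) z) (M C : ℝ) (hM : 1 ≤ M)
    (hC : ∀ z : ℂ, 0 < z.re → z.re ≤ M → z.im ≠ 0 → ‖h z‖ ≤ C * (z.im^2)⁻¹)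
    (p : ℂ) (hp : 0 < p.re) (hpM : p.re ≤ M) (hi : p.im ≠ 0) :
    ‖H p - H (1 + Complex.I * p.im)‖ ≤ (C * (M + 1)) * (p.im^2)⁻¹ := by
  set S : Set ℂ := ({z : ℂ | 0 < z.re} ∩ {z : ℂ | z.re ≤ M}) ∩ {z : ℂ | z.im = p.im} with hS
  have hconv : Convex ℝ S := ((convex_halfSpace_re_gt 0).inter (convex_halfSpace_re_le M)).inter
    (convex_hyperplane Complex.imCLM.isLinear p.im)
  have h1 := hconv.norm_image_sub_le_of_norm_hasDerivWithin_le (f := H) (f' := h) (C := C * (p.im^2)⁻¹)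
    (x := 1 + Complex.I * p.im) (y := p) (fun z hz => (hH z hz.1.1).hasDerivWithinAt)
    (fun z hz => by
      have : z.im = p.im := hz.2
      rw [← this]
      exact hC z hz.1.1 hz.1.2 (this ▸ hi)) (by simp [hS, hM]) (by simp [hS, hp, hpM])
  refine h1.trans ?_
  have h2 : p - (1 + Complex.I * p.im) = ((p.re - 1 : ℝ) : ℂ) := by
    apply Complex.ext <;> simp
  rw [h2, Complex.norm_real, Real.norm_eq_abs]
  have h3 : |p.re - 1| ≤ M + 1 := by rw [abs_le]; constructor <;> linarith
  have h4 : 0 ≤ C * (p.im^2)⁻¹ := (norm_nonneg _).trans (hC p hp hpM hi)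
  calc _ ≤ C * (p.im^2)⁻¹ * (M+1) := by gcongr
    _ = _ := by ring

lemma cms_limit (h H : ℂ → ℂ) (hH : ∀ z : ℂ, 0 < z.re → HasDerivAt H (h z) z) (M C : ℝ) (hM : 1 ≤ M)
    (hC : ∀ z : ℂ, 0 < z.re → z.re ≤ M → z.im ≠ 0 → ‖h z‖ ≤ C * (z.im^2)⁻¹)
    (hi : Integrable (fun y : ℝ => h (1 + Complex.I * y)))
    {l : Filter ℝ} [l.IsCountablyGenerated] (p q : ℝ → ℂ) (hp : ∀ᶠ a in l, 0 < (p a).re ∧ (p a).re ≤ M)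
    (hq : ∀ᶠ a in l, 0 < (q a).re ∧ (q a).re ≤ M)
    (hpt : Tendsto (fun a => (p a).im) l atTop) (hqt : Tendsto (fun a => (q a).im) l atBot) :
    Tendsto (fun a => H (p a) - H (q a)) l (nhds (Complex.I * ∫ y : ℝ, h (1 + Complex.I * y))) := by
  have h1 : Tendsto (fun a => H (p a) - H (1 + Complex.I * (p a).im)) l (nhds 0) := by
    have hz : Tendsto (fun a => (C * (M + 1)) * ((p a).im^2)⁻¹) l (nhds 0) := by
      have := (tendsto_inv_atTop_zero.comp ((tendsto_pow_atTop two_ne_zero).comp hpt)).const_mul (C * (M+1))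
      simpa using this
    refine squeeze_zero_norm' ?_ hz
    filter_upwards [hp, hpt.eventually_gt_atTop 0] with a ha ha'
    exact cms_horiz h H hH M C hM hC _ ha.1 ha.2 ha'.ne'
  have h2 : Tendsto (fun a => H (q a) - H (1 + Complex.I * (q a).im)) l (nhds 0) := by
    have hz : Tendsto (fun a => (C * (M + 1)) * ((q a).im^2)⁻¹) l (nhds 0) := by
      have := (tendsto_inv_atTop_zero.comp ((tendsto_pow_atTop two_ne_zero).comp (tendsto_neg_atBot_atTop.comp hqt))).const_mul (C * (M+1))
      simpa using this
    refine squeeze_zero_norm' ?_ hz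
    filter_upwards [hq, hqt.eventually_lt_atBot 0] with a ha ha'
    exact cms_horiz h H hH M C hM hC _ ha.1 ha.2 ha'.ne
  have h3 : Tendsto (fun a => ∫ y in (q a).im..(p a).im, Complex.I * h (1 + Complex.I * y)) l
      (nhds (∫ y : ℝ, Complex.I * h (1 + Complex.I * y))) :=
    intervalIntegral_tendsto_integral (hi.const_mul _) hqt hpt
  have h4 : ∀ a b : ℝ, ∫ y in a..b, Complex.I * h (1 + Complex.I * y) = H (1 + Complex.I * b) - H (1 + Complex.I * a) := by
    intro a b
    refine intervalIntegral.integral_eq_sub_of_hasDerivAt (f := fun y : ℝ => H (1 + Complex.I * y)) (fun y _ => ?_) (hi.const_mul _).intervalIntegrable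
    have hg : HasDerivAt (fun y : ℝ => (1 + Complex.I * y : ℂ)) Complex.I y := by
      have := ((Complex.ofRealCLM.hasDerivAt (x := y)).const_mul Complex.I).const_add 1
      simpa using this
    have := (hH (1 + Complex.I * y) (by simp)).comp y hg
    rw [mul_comm]
    exact this
  rw [← integral_const_mul]
  have := (h1.sub h2).add h3
  simp only [h4, sub_zero, zero_add] at this
  refine this.congr fun a => ?_
  ring

lemma cms_G (s ε : ℝ) (hε : ε = 1 ∨ ε = -1) : ∃ G : ℂ → ℂ,
    (∀ z : ℂ, 0 < z.re → HasDerivAt G (Complex.exp (ε * z) * z ^ (-(1 - Complex.I * s))) z) ∧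
    ∀ (M : ℝ) (_ : 1 ≤ M) (l : Filter ℝ) [l.IsCountablyGenerated] (p q : ℝ → ℂ)
      (_ : ∀ᶠ a in l, 0 < (p a).re ∧ (p a).re ≤ M) (_ : ∀ᶠ a in l, 0 < (q a).re ∧ (q a).re ≤ M)
      (_ : Tendsto (fun a => (p a).im) l atTop) (_ : Tendsto (fun a => (q a).im) l atBot),
      Tendsto (fun a => G (p a) - G (q a)) l
        (nhds (if ε = 1 then 2 * Real.pi * Complex.I / Complex.Gamma (1 - Complex.I * s) else 0)) := by
  have hsl : ∀ z : ℂ, 0 < z.re → z ∈ Complex.slitPlane := fun z hz => Or.inl hz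
  have hee : (ε : ℂ) * ε = 1 := by rcases hε with h | h <;> simp [h]
  have hab : |ε| = 1 := by rcases hε with h | h <;> simp [h]
  set h : ℂ → ℂ := fun z => Complex.exp (ε * z) * z ^ (-(2 - Complex.I * s)) with hh
  obtain ⟨H, hH⟩ := cms_prim h (by
    intro z hz
    refine DifferentiableAt.differentiableWithinAt ?_
    exact DifferentiableAt.mul (by fun_prop) (differentiableAt_id.cpow_const (hsl z hz)))
  have hexp : ∀ (z : ℂ) (M : ℝ), 0 < z.re → z.re ≤ M → ‖Complex.exp (ε * z)‖ ≤ Real.exp M := by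
    intro z M hz hM
    rw [Complex.norm_exp]
    gcongr
    simp
    calc ε * z.re ≤ |ε * z.re| := le_abs_self _
      _ = z.re := by rw [abs_mul, hab, one_mul, abs_of_pos hz]
      _ ≤ M := hM
  have hC : ∀ M : ℝ, ∀ z : ℂ, 0 < z.re → z.re ≤ M → z.im ≠ 0 → ‖h z‖ ≤ (Real.exp M * Real.exp (Real.pi * |s|)) * (z.im^2)⁻¹ := by
    intro M z hz hM hi
    have hz0 : z ≠ 0 := fun h0 => by simp [h0] at hz
    rw [hh, norm_mul, mul_assoc]
    have : z.im^2 ≤ ‖z‖^2 := by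
      rw [← Complex.normSq_eq_norm_sq, Complex.normSq_apply]; nlinarith [mul_self_nonneg z.re]
    have hp : 0 < z.im^2 := by positivity
    refine mul_le_mul (hexp z M hz hM) ((cms_cpow_bound s z hz0).trans ?_) (norm_nonneg _) (by positivity)
    gcongr
  have hi : Integrable (fun y : ℝ => h (1 + Complex.I * y)) := by
    refine (cms_line_integrable s).bdd_mul (c := Real.exp 1) (f := fun y : ℝ => Complex.exp (ε * (1 + Complex.I * y))) ?_ ?_
    · exact Continuous.aestronglyMeasurable (by fun_prop)
    · exact ae_of_all _ fun y => hexp _ 1 (by simp) (by simp)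
  have hG1 : Complex.Gamma (2 - Complex.I * s) = (1 - Complex.I * s) * Complex.Gamma (1 - Complex.I * s) := by
    rw [← Complex.Gamma_add_one]
    · congr 1; ring
    · intro h0; simpa using congrArg Complex.re h0
  have hne1 : (1 - Complex.I * s) ≠ 0 := fun h0 => by simpa using congrArg Complex.re h0
  have hG0 : Complex.Gamma (1 - Complex.I * s) ≠ 0 := Complex.Gamma_ne_zero_of_re_pos (by simp)
  have hval : (ε * (1 - Complex.I * s)) * (Complex.I * ∫ y : ℝ, h (1 + Complex.I * y)) =
      (if ε = 1 then 2 * Real.pi * Complex.I / Complex.Gamma (1 - Complex.I * s) else 0) := by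
    have e1 : ∫ y : ℝ, h (1 + Complex.I * y) = Complex.exp ε * ∫ y : ℝ, Complex.exp (ε * (Complex.I * y)) * (1 + Complex.I * y) ^ (-(2 - Complex.I * s)) := by
      rw [← integral_const_mul]
      congr 1
      ext y
      rw [hh]
      simp only [mul_add, mul_one, Complex.exp_add]
      ring
    have e2 := cms_inversion s ε
    rw [integral_mul_const, hG1] at e2
    rw [e1]
    rcases hε with he | he
    · subst he
      simp only [Set.indicator, Set.mem_Ioi, zero_lt_one, if_true, Complex.ofReal_one, Complex.one_cpow, one_mul] at e2 ⊢
      rw [eq_div_iff hG0]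
      have e3 : Complex.exp 1 * Complex.exp (-1) = 1 := by rw [← Complex.exp_add]; simp
      linear_combination (Complex.exp 1 * Complex.I) * e2 + 2 * Real.pi * Complex.I * e3
    · subst he
      have : ¬ ((0:ℝ) < -1) := by norm_num
      simp only [Set.indicator, Set.mem_Ioi, this, if_false, mul_zero] at e2
      have e3 := (mul_eq_zero.1 e2).resolve_right (mul_ne_zero hne1 hG0)
      rw [e3]
      norm_num
  refine ⟨fun z => ε * (Complex.exp (ε * z) * z ^ (-(1 - Complex.I * s))) + (ε * (1 - Complex.I * s)) * H z, ?_, ?_⟩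
  · intro z hz
    have d1 : HasDerivAt (fun z : ℂ => Complex.exp (ε * z)) (Complex.exp (ε * z) * ε) z := by
      have : HasDerivAt (fun z : ℂ => (ε:ℂ) * z) ε z := by simpa using (hasDerivAt_id z).const_mul (ε:ℂ)
      exact this.cexp
    have d2 : HasDerivAt (fun z : ℂ => z ^ (-(1 - Complex.I * s))) (-(1 - Complex.I * s) * z ^ (-(1 - Complex.I * s) - 1) * 1) z :=
      (hasDerivAt_id z).cpow_const (hsl z hz)
    have d3 := ((d1.mul d2).const_mul (ε:ℂ)).add ((hH z hz).const_mul (ε * (1 - Complex.I * s)))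
    refine d3.congr_deriv ?_
    rw [hh]
    have : -(1 - Complex.I * s) - 1 = -(2 - Complex.I * s) := by ring
    rw [this]
    linear_combination ((Complex.exp (ε * z) * z ^ (-(1 - Complex.I * s)))) * hee
  · intro M hM l _ p q hp hq hpt hqt
    have k1 := (cms_limit h H hH M _ hM (hC M) hi p q hp hq hpt hqt).const_mul (ε * (1 - Complex.I * s))
    rw [hval] at k1
    have kz : ∀ p : ℝ → ℂ, (∀ᶠ a in l, 0 < (p a).re ∧ (p a).re ≤ M) → Tendsto (fun a => |(p a).im|) l atTop →
        Tendsto (fun a => (ε:ℂ) * (Complex.exp (ε * p a) * (p a) ^ (-(1 - Complex.I * s)))) l (nhds 0) := by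
      intro p hp hpt
      have hz : Tendsto (fun a => Real.exp M * Real.exp (Real.pi * |s|) * (|(p a).im|)⁻¹) l (nhds 0) := by
        simpa using (tendsto_inv_atTop_zero.comp hpt).const_mul (Real.exp M * Real.exp (Real.pi * |s|))
      refine squeeze_zero_norm' ?_ hz
      filter_upwards [hp, hpt.eventually_gt_atTop 0] with a ha ha'
      have hz0 : p a ≠ 0 := fun h0 => by simp [h0] at ha
      have hzn : 0 < ‖p a‖ := norm_pos_iff.2 hz0
      have e : p a ^ (-(1 - Complex.I * s)) = p a ^ (-(2 - Complex.I * s)) * p a := by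
        nth_rewrite 3 [← Complex.cpow_one (p a)]
        rw [← Complex.cpow_add _ _ hz0]; congr 1; ring
      rw [norm_mul, norm_mul, Complex.norm_real, Real.norm_eq_abs, hab, one_mul, e, norm_mul, mul_assoc]
      refine mul_le_mul (hexp _ M ha.1 ha.2) ?_ (by positivity) (by positivity)
      calc ‖p a ^ (-(2 - Complex.I * s))‖ * ‖p a‖ ≤ (Real.exp (Real.pi * |s|) * (‖p a‖^2)⁻¹) * ‖p a‖ := by
            gcongr; exact cms_cpow_bound s _ hz0
        _ = Real.exp (Real.pi * |s|) * ‖p a‖⁻¹ := by field_simp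
        _ ≤ _ := by gcongr; exact Complex.abs_im_le_norm _
    have k2 := kz p hp (tendsto_abs_atTop_atTop.comp hpt)
    have k3 := kz q hq (tendsto_abs_atBot_atTop.comp hqt)
    have := (k2.sub k3).add k1
    simp only [sub_zero, zero_add] at this
    refine this.congr fun a => ?_
    ring

/-- The angular integrand. -/
noncomputable def cmsF (t b θ : ℝ) : ℂ :=
  Complex.exp (t + Complex.I * (t * (1 + b * θ) * Real.tan θ + b * t * (Real.log t + Real.log (1 + b * θ) - Real.log (Real.cos θ)) : ℝ))

lemma cmsF_norm (t b θ : ℝ) : ‖cmsF t b θ‖ = Real.exp t := by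
  rw [cmsF, Complex.norm_exp]; simp

lemma cmsF_meas (t b : ℝ) : Measurable (cmsF t b) := by
  have : Measurable Real.tan := by
    have : Real.tan = fun x => Real.sin x / Real.cos x := funext Real.tan_eq_sin_div_cos
    rw [this]
    exact Real.measurable_sin.div Real.measurable_cos
  unfold cmsF
  fun_prop

lemma cms_curve (t b θ σ : ℝ) (ht : 0 < t) (hb : 0 < 1 + b * θ) (hθ : θ ∈ Set.Ioo (-(Real.pi/2)) (Real.pi/2))
    (hσ : σ = 1 ∨ σ = -1) :
    let u : ℂ := t * (1 + b * θ) * (1 + σ * Complex.I * Real.tan θ)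
    Complex.exp (σ * u) * u ^ (-(1 - Complex.I * (b * t : ℝ))) * u = Complex.exp ((σ - 1) * t) * cmsF t b θ := by
  intro u
  have hc : 0 < Real.cos θ := Real.cos_pos_of_mem_Ioo hθ
  have hcc : (Real.cos θ : ℂ) ≠ 0 := by exact_mod_cast hc.ne'
  set L : ℝ := Real.log t + Real.log (1 + b * θ) - Real.log (Real.cos θ) with hL
  have hLe : Real.exp L = t * (1 + b * θ) / Real.cos θ := by
    rw [hL, Real.exp_sub, Real.exp_add, Real.exp_log ht, Real.exp_log hb, Real.exp_log hc]
  have hu : u = Complex.exp (L + σ * θ * Complex.I) := by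
    have e1 : Complex.exp ((σ * θ : ℝ) * Complex.I) = Real.cos θ + σ * Real.sin θ * Complex.I := by
      rw [Complex.exp_mul_I, ← Complex.ofReal_cos, ← Complex.ofReal_sin]
      rcases hσ with h | h <;> simp [h]
    rw [Complex.exp_add, ← Complex.ofReal_exp, hLe, ← Complex.ofReal_mul, e1]
    simp only [u]
    rw [Real.tan_eq_sin_div_cos]
    push_cast at hcc ⊢
    field_simp
  have hu0 : u ≠ 0 := by rw [hu]; exact Complex.exp_ne_zero _
  have hlog : Complex.log u = L + σ * θ * Complex.I := by
    rw [hu, Complex.log_exp]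
    · have := hθ.1; have := Real.pi_pos
      have := hθ.2
      rcases hσ with h | h <;> simp [h] <;> linarith
    · have := hθ.1; have := Real.pi_pos
      have := hθ.2
      rcases hσ with h | h <;> simp [h] <;> linarith
  have hss : (σ : ℂ) * σ = 1 := by rcases hσ with h | h <;> simp [h]
  have hpow : u ^ (-(1 - Complex.I * (b * t : ℝ))) * u = Complex.exp (Complex.I * (b * t : ℝ) * (L + σ * θ * Complex.I)) := by
    nth_rewrite 2 [← Complex.cpow_one u]
    rw [← Complex.cpow_add _ _ hu0, Complex.cpow_def_of_ne_zero hu0, hlog]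
    congr 1; ring
  rw [mul_assoc, hpow, ← Complex.exp_add, cmsF, ← Complex.exp_add, ← hL]
  congr 1
  simp only [u]
  push_cast
  linear_combination (t * (1 + b * θ) * Complex.I * Complex.tan θ) * hss + (b * t * σ * θ) * Complex.I_mul_I

lemma cms_theta (t b : ℝ) (ht : 0 < t) (hb : |b| < 2 / Real.pi) :
    ∫ θ in Set.Ioo (-(Real.pi/2)) (Real.pi/2), cmsF t b θ = Real.pi / Complex.Gamma (1 - Complex.I * (b * t : ℝ)) := by
  have hpi := Real.pi_pos
  obtain ⟨G1, hG1, hL1⟩ := cms_G (b*t) 1 (Or.inl rfl)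
  obtain ⟨G2, hG2, hL2⟩ := cms_G (b*t) (-1) (Or.inr rfl)
  set u : ℝ → ℝ → ℂ := fun σ θ => t * (1 + b * θ) * (1 + σ * Complex.I * Real.tan θ) with hu
  have hbd : ∀ θ ∈ Set.Icc (-(Real.pi/2)) (Real.pi/2), |b * θ| ≤ |b| * (Real.pi/2) := by
    intro θ hθ
    rw [abs_mul]
    gcongr
    exact abs_le.2 hθ
  have hb1 : |b| * (Real.pi/2) < 1 := by
    rw [lt_div_iff₀ hpi] at hb; linarith
  have hbp : ∀ θ ∈ Set.Icc (-(Real.pi/2)) (Real.pi/2), 0 < 1 + b * θ ∧ 1 + b * θ ≤ 2 := by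
    intro θ hθ
    have := abs_le.1 (hbd θ hθ)
    constructor <;> linarith
  have hre : ∀ σ θ : ℝ, (u σ θ).re = t * (1 + b * θ) := by
    intro σ θ
    have : u σ θ = ((t * (1 + b * θ) : ℝ) : ℂ) + ((t * (1 + b * θ) * σ * Real.tan θ : ℝ) : ℂ) * Complex.I := by
      simp only [hu]; push_cast; ring
    rw [this]; simp
  have him : ∀ σ θ : ℝ, (u σ θ).im = σ * (t * (1 + b * θ) * Real.tan θ) := by
    intro σ θ
    have : u σ θ = ((t * (1 + b * θ) : ℝ) : ℂ) + ((σ * (t * (1 + b * θ) * Real.tan θ) : ℝ) : ℂ) * Complex.I := by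
      simp only [hu]; push_cast; ring
    rw [this]
    simp only [Complex.add_im, Complex.mul_im, Complex.ofReal_re, Complex.ofReal_im, Complex.I_re, Complex.I_im]
    ring
  have hrep : ∀ σ, ∀ θ ∈ Set.Icc (-(Real.pi/2)) (Real.pi/2), 0 < (u σ θ).re ∧ (u σ θ).re ≤ 2 * t + 1 := by
    intro σ θ hθ
    rw [hre]
    have := hbp θ hθ
    exact ⟨mul_pos ht this.1, by nlinarith⟩
  have hder : ∀ σ : ℝ, (σ = 1 ∨ σ = -1) → ∀ θ ∈ Set.Ioo (-(Real.pi/2)) (Real.pi/2),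
      HasDerivAt (u σ) (u σ θ * (b / (1 + b * θ) + σ * Complex.I * (1 - σ * Complex.I * Real.tan θ))) θ := by
    intro σ hσ θ hθ
    have hc : Real.cos θ ≠ 0 := (Real.cos_pos_of_mem_Ioo hθ).ne'
    have d1 := (Real.hasDerivAt_tan hc).ofReal_comp
    have d2 : HasDerivAt (fun θ : ℝ => (t * (1 + b * θ) : ℂ)) (t * b) θ := by
      have := ((((hasDerivAt_id θ).ofReal_comp).const_mul (b:ℂ)).const_add 1).const_mul (t:ℂ)
      exact this.congr_deriv (by simp)
    have d3 := d2.mul ((d1.const_mul (σ * Complex.I)).const_add 1)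
    refine d3.congr_deriv ?_
    have hne : (1 + b * θ : ℂ) ≠ 0 := by
      exact_mod_cast (hbp θ ⟨hθ.1.le, hθ.2.le⟩).1.ne'
    have hsec : ((1 / Real.cos θ ^ 2 : ℝ) : ℂ) = 1 + (Real.tan θ : ℂ)^2 := by
      have : 1 / Real.cos θ ^ 2 = 1 + Real.tan θ ^ 2 := by
        rw [Real.tan_eq_sin_div_cos]; field_simp; linarith [Real.sin_sq_add_cos_sq θ]
      rw [this]; push_cast; ring
    rw [hsec]
    have hss : (σ : ℂ) * σ = 1 := by rcases hσ with h | h <;> simp [h]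
    simp only [hu]
    field_simp
    have hI := Complex.I_mul_I
    have hIs : (σ * Complex.I) * (σ * Complex.I) = -1 := by
      linear_combination (Complex.I * Complex.I) * hss + hI
    linear_combination (t * (1 + b * θ) * (Real.tan θ : ℂ)^2 * (σ * Complex.I)) * hIs
  set Q : ℝ → ℂ := fun θ => (G1 (u 1 θ) - Complex.exp (2 * t) * G2 (u (-1) θ)) / (2 * Complex.I) with hQ
  have hQd : ∀ θ ∈ Set.Ioo (-(Real.pi/2)) (Real.pi/2), HasDerivAt Q (cmsF t b θ) θ := by
    intro θ hθ
    have hθ' : θ ∈ Set.Icc (-(Real.pi/2)) (Real.pi/2) := ⟨hθ.1.le, hθ.2.le⟩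
    have c1 := cms_curve t b θ 1 ht (hbp θ hθ').1 hθ (Or.inl rfl)
    have c2 := cms_curve t b θ (-1) ht (hbp θ hθ').1 hθ (Or.inr rfl)
    have e1 := (hG1 _ (hrep 1 θ hθ').1).comp θ (hder 1 (Or.inl rfl) θ hθ)
    have e2 := (hG2 _ (hrep (-1) θ hθ').1).comp θ (hder (-1) (Or.inr rfl) θ hθ)
    have e3 := (e1.sub (e2.const_mul (Complex.exp (2 * t)))).div_const (2 * Complex.I)
    refine e3.congr_deriv ?_
    have c1' : Complex.exp ((1:ℝ) * u 1 θ) * u 1 θ ^ (-(1 - Complex.I * (b * t : ℝ))) * u 1 θ = cmsF t b θ := by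
      refine c1.trans ?_
      simp
    have c2' : Complex.exp (2 * t) * (Complex.exp ((-1:ℝ) * u (-1) θ) * u (-1) θ ^ (-(1 - Complex.I * (b * t : ℝ))) * u (-1) θ) = cmsF t b θ := by
      refine (congrArg (Complex.exp (2 * t) * ·) c2).trans ?_
      rw [← mul_assoc, ← Complex.exp_add]
      have : (2 * t + (((-1 : ℝ) : ℂ) - 1) * t : ℂ) = 0 := by push_cast; ring
      rw [this]; simp
    rw [div_eq_iff (by simp)]
    push_cast at c1' c2' ⊢
    linear_combination ((b:ℂ) / (1 + b * θ) + 1 * Complex.I * (1 - 1 * Complex.I * Complex.tan θ)) * c1' - ((b:ℂ) / (1 + b * θ) + (-1) * Complex.I * (1 - (-1) * Complex.I * Complex.tan θ)) * c2'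
  have hInt0 : Integrable (cmsF t b) (volume.restrict (Set.Icc (-(Real.pi/2)) (Real.pi/2))) := by
    refine Integrable.of_bound (cmsF_meas t b).aestronglyMeasurable (Real.exp t) (ae_of_all _ fun θ => (cmsF_norm t b θ).le)
  have hii : ∀ x y, x ∈ Set.Icc (-(Real.pi/2)) (Real.pi/2) → y ∈ Set.Icc (-(Real.pi/2)) (Real.pi/2) → IntervalIntegrable (cmsF t b) volume x y := by
    intro x y hx hy
    refine IntegrableOn.intervalIntegrable (IntegrableOn.mono_set hInt0 ?_)
    exact Set.uIcc_subset_Icc hx hy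
  set l : Filter ℝ := nhdsWithin (Real.pi/2) (Set.Iio (Real.pi/2)) with hl
  have hmem : ∀ᶠ a in l, a ∈ Set.Ioo 0 (Real.pi/2) := Ioo_mem_nhdsLT (by positivity)
  have hFTC : ∀ a ∈ Set.Ioo 0 (Real.pi/2), ∫ θ in (-a)..a, cmsF t b θ = Q a - Q (-a) := by
    intro a ha
    have h1 := ha.1
    have h2 := ha.2
    refine intervalIntegral.integral_eq_sub_of_hasDerivAt (fun x hx => hQd x ?_) (hii _ _ ⟨by linarith, by linarith⟩ ⟨by linarith, by linarith⟩)
    rw [Set.uIcc_of_le (by linarith)] at hx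
    exact ⟨by linarith [hx.1], by linarith [hx.2]⟩
  have hid : Tendsto (fun a : ℝ => a) l (nhds (Real.pi/2)) := tendsto_nhdsWithin_of_tendsto_nhds tendsto_id
  have hlimL : Tendsto (fun a => ∫ θ in (-a)..a, cmsF t b θ) l (nhds (∫ θ in Set.Ioo (-(Real.pi/2)) (Real.pi/2), cmsF t b θ)) := by
    have hneg : Tendsto (fun a : ℝ => -a) l (nhds (-(Real.pi/2))) := hid.neg
    have key : Tendsto (fun a => ∫ θ, (Set.Ioc (-a) a).indicator (cmsF t b) θ ∂(volume.restrict (Set.Ioo (-(Real.pi/2)) (Real.pi/2)))) l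
        (nhds (∫ θ in Set.Ioo (-(Real.pi/2)) (Real.pi/2), cmsF t b θ)) := by
      refine tendsto_integral_filter_of_dominated_convergence (fun _ => Real.exp t) ?_ ?_ ?_ ?_
      · exact Eventually.of_forall fun a => ((cmsF_meas t b).indicator measurableSet_Ioc).aestronglyMeasurable
      · exact Eventually.of_forall fun a => ae_of_all _ fun θ => (norm_indicator_le_norm_self _ _).trans (cmsF_norm t b θ).le
      · exact integrable_const _
      · refine (ae_restrict_mem measurableSet_Ioo).mono fun θ hθ => ?_
        refine tendsto_const_nhds.congr' ?_
        filter_upwards [hneg.eventually_lt_const hθ.1, hid.eventually_const_lt hθ.2] with a h1 h2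
        rw [Set.indicator_of_mem (show θ ∈ Set.Ioc (-a) a from ⟨h1, h2.le⟩)]
    refine key.congr' ?_
    filter_upwards [hmem] with a ha
    have h1 := ha.1
    have h2 := ha.2
    rw [integral_indicator measurableSet_Ioc, Measure.restrict_restrict measurableSet_Ioc, intervalIntegral.integral_of_le (by linarith)]
    congr 2
    rw [Set.inter_eq_left]
    intro x hx
    exact ⟨by linarith [hx.1], by linarith [hx.2]⟩
  have hmI : ∀ᶠ a in l, a ∈ Set.Icc (-(Real.pi/2)) (Real.pi/2) := hmem.mono fun a ha => ⟨by linarith [ha.1], ha.2.le⟩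
  have hmI' : ∀ᶠ a in l, -a ∈ Set.Icc (-(Real.pi/2)) (Real.pi/2) := hmem.mono fun a ha => ⟨by linarith [ha.2], by linarith [ha.1]⟩
  have hT : Tendsto (fun a => t * (1 + b * a) * Real.tan a) l atTop := by
    have h1 : Tendsto (fun a : ℝ => t * (1 + b * a)) l (nhds (t * (1 + b * (Real.pi/2)))) := ((hid.const_mul b).const_add 1).const_mul t
    exact h1.pos_mul_atTop (mul_pos ht (hbp _ ⟨by linarith, le_rfl⟩).1) Real.tendsto_tan_pi_div_two
  have hT' : Tendsto (fun a => t * (1 + b * (-a)) * Real.tan (-a)) l atBot := by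
    have h1 : Tendsto (fun a : ℝ => t * (1 + b * (-a))) l (nhds (t * (1 + b * (-(Real.pi/2))))) := ((hid.neg.const_mul b).const_add 1).const_mul t
    have := h1.pos_mul_atTop (mul_pos ht (hbp _ ⟨le_rfl, by linarith⟩).1) Real.tendsto_tan_pi_div_two
    refine (tendsto_neg_atTop_atBot.comp this).congr fun a => ?_
    simp [Real.tan_neg]
  have hM : (1:ℝ) ≤ 2 * t + 1 := by linarith
  have k1 := hL1 (2 * t + 1) hM l (fun a => u 1 a) (fun a => u 1 (-a)) (hmI.mono fun a ha => hrep 1 a ha) (hmI'.mono fun a ha => hrep 1 _ ha)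
    (by simp only [him, one_mul]; exact hT) (by simp only [him, one_mul]; exact hT')
  have k2 := hL2 (2 * t + 1) hM l (fun a => u (-1) (-a)) (fun a => u (-1) a) (hmI'.mono fun a ha => hrep (-1) _ ha) (hmI.mono fun a ha => hrep (-1) _ ha)
    (by simp only [him, neg_one_mul]; exact tendsto_neg_atBot_atTop.comp hT') (by simp only [him, neg_one_mul]; exact tendsto_neg_atTop_atBot.comp hT)
  rw [if_pos rfl] at k1
  rw [if_neg (by norm_num)] at k2
  have k3 := (k1.add (k2.const_mul (Complex.exp (2 * t)))).div_const (2 * Complex.I)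
  refine tendsto_nhds_unique hlimL (Tendsto.congr' ?_ (k3.trans (le_of_eq ?_)))
  · filter_upwards [hmem] with a ha
    rw [hFTC a ha]
    simp only [hQ]
    ring
  · congr 1
    have := Complex.I_ne_zero
    rw [mul_zero, add_zero]
    field_simp

lemma cms_one_add_pos (b θ : ℝ) (hb : |b| ≤ 2 / Real.pi) (hθ : θ ∈ Set.Ioo (-(Real.pi/2)) (Real.pi/2)) :
    0 < 1 + b * θ := by
  have hpi := Real.pi_pos
  have h1 : |b * θ| < 1 := by
    rw [abs_mul]
    have h2 : |θ| < Real.pi / 2 := abs_lt.2 hθ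
    calc |b| * |θ| ≤ 2 / Real.pi * |θ| := by gcongr
      _ < 2 / Real.pi * (Real.pi / 2) := by gcongr
      _ = 1 := by field_simp
  linarith [(abs_lt.1 h1).1]

lemma cms_theta_le (t b : ℝ) (ht : 0 < t) (hb : |b| ≤ 2 / Real.pi) :
    ∫ θ in Set.Ioo (-(Real.pi/2)) (Real.pi/2), cmsF t b θ = Real.pi / Complex.Gamma (1 - Complex.I * (b * t : ℝ)) := by
  have hpi := Real.pi_pos
  set l : Filter ℝ := nhdsWithin 1 (Set.Iio 1) with hl
  have hid : Tendsto (fun c : ℝ => c) l (nhds 1) := tendsto_nhdsWithin_of_tendsto_nhds tendsto_id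
  have hbc : Tendsto (fun c : ℝ => b * c) l (nhds b) := by simpa using hid.const_mul b
  have hmem : ∀ᶠ a in l, a ∈ Set.Ioo (0:ℝ) 1 := Ioo_mem_nhdsLT (by positivity)
  have h1 : Tendsto (fun c : ℝ => ∫ θ in Set.Ioo (-(Real.pi/2)) (Real.pi/2), cmsF t (b * c) θ) l
      (nhds (∫ θ in Set.Ioo (-(Real.pi/2)) (Real.pi/2), cmsF t b θ)) := by
    refine tendsto_integral_filter_of_dominated_convergence (fun _ => Real.exp t) ?_ ?_ ?_ ?_
    · exact Eventually.of_forall fun a => (cmsF_meas t _).aestronglyMeasurable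
    · exact Eventually.of_forall fun a => ae_of_all _ fun θ => (cmsF_norm t _ θ).le
    · exact integrable_const _
    · refine (ae_restrict_mem measurableSet_Ioo).mono fun θ hθ => ?_
      have hc : ContinuousAt (fun b => cmsF t b θ) b := by
        have : 1 + b * θ ≠ 0 := (cms_one_add_pos b θ hb hθ).ne'
        unfold cmsF
        fun_prop (disch := assumption)
      exact hc.tendsto.comp hbc
  have h2 : Tendsto (fun c : ℝ => Real.pi / Complex.Gamma (1 - Complex.I * ((b * c) * t : ℝ))) l
      (nhds (Real.pi / Complex.Gamma (1 - Complex.I * (b * t : ℝ)))) := by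
    have hc : Continuous (fun b : ℝ => (Real.pi : ℂ) / Complex.Gamma (1 - Complex.I * (b * t : ℝ))) := by
      simp only [div_eq_mul_inv]
      exact continuous_const.mul (Complex.differentiable_one_div_Gamma.continuous.comp (by fun_prop))
    exact (hc.tendsto b).comp hbc
  refine tendsto_nhds_unique h1 (h2.congr' ?_)
  filter_upwards [hmem] with c hc
  rw [cms_theta t (b * c) ht]
  rw [abs_mul, abs_of_pos hc.1]
  have : 0 < 2 / Real.pi := by positivity
  calc |b| * c ≤ 2 / Real.pi * c := by gcongr; exact hc.1.le
    _ < 2 / Real.pi * 1 := by gcongr; exact hc.2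
    _ = _ := mul_one _

lemma cms_exp (s : ℝ) : ∫ w, Complex.exp (-(Complex.I * s * Real.log w)) ∂(expMeasure 1) = Complex.Gamma (1 - Complex.I * s) := by
  have hm : Measurable (fun x => gammaPDF 1 1 x) := (measurable_gammaPDFReal 1 1).ennreal_ofReal
  rw [expMeasure, gammaMeasure, integral_withDensity_eq_integral_toReal_smul hm (ae_of_all _ fun x => by simp [gammaPDF])]
  rw [Complex.Gamma_eq_integral (by simp), Complex.GammaIntegral, ← integral_indicator measurableSet_Ioi]
  refine integral_congr_ae ?_
  have h0 : ∀ᵐ x : ℝ, x ≠ 0 := by simp [ae_iff]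
  filter_upwards [h0] with x hx
  rcases lt_or_gt_of_ne hx with h | h
  · rw [gammaPDF_of_neg h]
    simp [h.le]
  · rw [gammaPDF_of_nonneg h.le, ENNReal.toReal_ofReal (by simp; positivity)]
    have : (x:ℂ) ≠ 0 := by exact_mod_cast hx
    simp only [Set.indicator, Set.mem_Ioi, h, if_true]
    rw [Complex.cpow_def_of_ne_zero this, ← Complex.ofReal_log h.le]
    simp
    congr 1; ring

lemma cms_main_pos
    {Ω' : Type*} [MeasureSpace Ω'] [IsProbabilityMeasure (ℙ : Measure Ω')]
    (β : ℝ) (hβ : β ∈ Set.Icc (-1 : ℝ) 1)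
    (Θ W : Ω' → ℝ) (hΘmeas : Measurable Θ) (hWmeas : Measurable W)
    (hΘ : pdf.IsUniform Θ (Set.Ioo (-(Real.pi / 2)) (Real.pi / 2)) ℙ volume)
    (hW : Measure.map W ℙ = expMeasure 1)
    (hindep : IndepFun Θ W ℙ)
    (R : Ω' → ℝ)
    (hR : ∀ ω, R ω =
      2 / Real.pi * ((Real.pi / 2 + β * Θ ω) * Real.tan (Θ ω) -
        β * Real.log (Real.pi / 2 * W ω * Real.cos (Θ ω) / (Real.pi / 2 + β * Θ ω))))
    (t : ℝ) (ht : 0 < t) :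
    ∫ ω, Complex.exp (Complex.I * (t : ℂ) * (R ω : ℂ)) = stableChar 1 β 1 0 t := by
  have hpi := Real.pi_pos
  set b : ℝ := 2 / Real.pi * β with hbdef
  have hb : |b| ≤ 2 / Real.pi := by
    rw [hbdef, abs_mul, abs_of_pos (by positivity)]
    exact mul_le_of_le_one_right (by positivity) (abs_le.2 hβ)
  have hΘ' : Measure.map Θ ℙ = ProbabilityTheory.cond volume (Set.Ioo (-(Real.pi / 2)) (Real.pi / 2)) := hΘ
  have hvol : volume (Set.Ioo (-(Real.pi / 2)) (Real.pi / 2)) = ENNReal.ofReal Real.pi := by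
    rw [Real.volume_Ioo]; congr 1; ring
  have hΘae : ∀ᵐ ω, Θ ω ∈ Set.Ioo (-(Real.pi / 2)) (Real.pi / 2) := by
    refine ae_of_ae_map hΘmeas.aemeasurable ?_
    rw [hΘ']
    exact ae_cond_mem measurableSet_Ioo
  have hWae : ∀ᵐ ω, 0 < W ω := by
    refine ae_of_ae_map (p := fun w => 0 < w) hWmeas.aemeasurable ?_
    rw [hW, expMeasure, gammaMeasure]
    have hm : Measurable (fun x => gammaPDF 1 1 x) := (measurable_gammaPDFReal 1 1).ennreal_ofReal
    rw [ae_withDensity_iff hm]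
    have h0 : ∀ᵐ x : ℝ, x ≠ 0 := by simp [ae_iff]
    filter_upwards [h0] with x hx h
    by_contra hn
    exact h (gammaPDF_of_neg (lt_of_le_of_ne (not_lt.1 hn) hx))
  set s : ℝ := b * t with hs
  have hpt : ∀ᵐ ω, Complex.exp (Complex.I * (t : ℂ) * (R ω : ℂ)) =
      (Complex.exp (-t - Complex.I * s * Real.log t) * cmsF t b (Θ ω)) * Complex.exp (-(Complex.I * s * Real.log (W ω))) := by
    filter_upwards [hΘae, hWae] with ω hθ hw
    have hc : 0 < Real.cos (Θ ω) := Real.cos_pos_of_mem_Ioo hθ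
    have h1 : 0 < 1 + b * Θ ω := cms_one_add_pos b _ hb hθ
    have e1 : Real.pi / 2 + β * Θ ω = Real.pi / 2 * (1 + b * Θ ω) := by
      rw [hbdef]; field_simp
    have e2 : Real.pi / 2 * W ω * Real.cos (Θ ω) / (Real.pi / 2 * (1 + b * Θ ω)) = W ω * Real.cos (Θ ω) / (1 + b * Θ ω) := by
      field_simp
    have e3 : R ω = (1 + b * Θ ω) * Real.tan (Θ ω) - b * (Real.log (W ω) + Real.log (Real.cos (Θ ω)) - Real.log (1 + b * Θ ω)) := by
      rw [hR, e1, e2, Real.log_div (by positivity) h1.ne', Real.log_mul hw.ne' hc.ne']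
      rw [mul_sub, ← mul_assoc, ← mul_assoc, ← mul_assoc (2 / Real.pi) β, ← hbdef]
      congr 2
      field_simp
    rw [e3, cmsF, ← Complex.exp_add, ← Complex.exp_add, hs]
    congr 1
    push_cast
    ring
  rw [integral_congr_ae hpt]
  have hind := hindep.integral_fun_comp_mul_comp (f := fun θ => Complex.exp (-t - Complex.I * s * Real.log t) * cmsF t b θ)
    (g := fun w => Complex.exp (-(Complex.I * s * Real.log w))) hΘmeas.aemeasurable hWmeas.aemeasurable
    ((cmsF_meas t b).const_mul _).aestronglyMeasurable (Measurable.aestronglyMeasurable (by fun_prop))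
  rw [hind, ← integral_map (φ := W) (f := fun w => Complex.exp (-(Complex.I * s * Real.log w))) hWmeas.aemeasurable (Measurable.aestronglyMeasurable (by fun_prop)), hW, cms_exp,
    integral_const_mul, ← integral_map (φ := Θ) (f := cmsF t b) hΘmeas.aemeasurable (cmsF_meas t b).aestronglyMeasurable, hΘ',
    ProbabilityTheory.cond, integral_smul_measure, cms_theta_le t b ht hb, hvol, ENNReal.toReal_inv, ENNReal.toReal_ofReal hpi.le]
  have hG0 : Complex.Gamma (1 - Complex.I * s) ≠ 0 := Complex.Gamma_ne_zero_of_re_pos (by simp)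
  have hpc : (Real.pi : ℂ) ≠ 0 := by exact_mod_cast hpi.ne'
  have e : ∀ E G : ℂ, G ≠ 0 → E * ((Real.pi:ℂ)⁻¹ * (Real.pi / G)) * G = E := by
    intro E G hG
    field_simp
  rw [Complex.real_smul, Complex.ofReal_inv, ← hs, e _ _ hG0, stableChar, stableW]
  congr 1
  rw [if_pos rfl, Real.sign_of_pos ht, abs_of_pos ht, hs, hbdef]
  push_cast
  simp
  ring

lemma cms_char_neg (β t : ℝ) : stableChar 1 β 1 0 (-t) = (starRingEnd ℂ) (stableChar 1 β 1 0 t) := by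
  rw [stableChar, stableChar, ← Complex.exp_conj]
  congr 1
  simp [stableW, Real.sign_neg]
  left
  have h2 : (starRingEnd ℂ) 2 = 2 := Complex.conj_ofNat 2
  rw [h2]
  ring


theorem chambers_mallows_stuck_eq_one
    {Ω' : Type*} [MeasureSpace Ω'] [IsProbabilityMeasure (ℙ : Measure Ω')]
    (β : ℝ) (hβ : β ∈ Set.Icc (-1 : ℝ) 1)
    (Θ W : Ω' → ℝ) (hΘmeas : Measurable Θ) (hWmeas : Measurable W)
    (hΘ : pdf.IsUniform Θ (Set.Ioo (-(Real.pi / 2)) (Real.pi / 2)) ℙ volume)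
    (hW : Measure.map W ℙ = expMeasure 1)
    (hindep : IndepFun Θ W ℙ)
    (R : Ω' → ℝ)
    (hR : ∀ ω, R ω =
      2 / Real.pi * ((Real.pi / 2 + β * Θ ω) * Real.tan (Θ ω) -
        β * Real.log (Real.pi / 2 * W ω * Real.cos (Θ ω) / (Real.pi / 2 + β * Θ ω)))) :
    ∀ t : ℝ, ∫ ω, Complex.exp (Complex.I * (t : ℂ) * (R ω : ℂ)) = stableChar 1 β 1 0 t := by
  intro t
  rcases lt_trichotomy t 0 with ht | ht | ht
  · have h := cms_main_pos β hβ Θ W hΘmeas hWmeas hΘ hW hindep R hR (-t) (by linarith)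
    have h2 := cms_char_neg β (-t)
    rw [neg_neg] at h2
    rw [h2, ← h, ← integral_conj]
    congr 1
    ext ω
    rw [← Complex.exp_conj]
    simp
  · subst ht
    simp [stableChar]
  · exact cms_main_pos β hβ Θ W hΘmeas hWmeas hΘ hW hindep R hR t ht
end
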